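/- Let K and L be convex bodies in ℝ³, both centrally symmetric about the origin O, with L contained in the interior of K and L strictly convex. Suppose that for every point z on the boundary of K the graze Σ(L,z) is contained in a plane Δ_z, and that K is almost free with respect to L. Then for each x ∈ bd K, the line through x and −x meets the plane Δ_x in a single point O_x, and the graze Σ(L,x) is centrally symmetric with centre O_x, i.e., for every point p ∈ Σ(L,x) the point 2·O_x − p also belongs to Σ(L,x). -/

import Mathlib

open Metric Set

noncomputable section

/-- The ambient space ℝ³. -/
abbrev E3 := EuclideanSpace ℝ (Fin 3)

/-- The cone generated by `L` with apex `x`: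
`C(L,x) = {x + λ (y - x) : y ∈ L, λ ≥ 0}`. -/
def coneGen (L : Set E3) (x : E3) : Set E3 :=
  {p | ∃ y ∈ L, ∃ l : ℝ, 0 ≤ l ∧ p = x + l • (y - x)}

/-- The support cone `S(L,x)` of `L` from `x`, the boundary of `C(L,x)`. -/
def suppCone (L : Set E3) (x : E3) : Set E3 := frontier (coneGen L x)

/-- The graze `Σ(L,x) = S(L,x) ∩ bd L`. -/
def graze (L : Set E3) (x : E3) : Set E3 := suppCone L x ∩ frontier L

/-- An affine subspace of `ℝ³` is a plane if its direction is 2-dimensional. -/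
def IsPlane (P : AffineSubspace ℝ E3) : Prop :=
  Module.finrank ℝ P.direction = 2

/-- The line through two points. -/
def lineThrough (a b : E3) : Set E3 := ↑(affineSpan ℝ ({a, b} : Set E3))

/-- `K` is almost free with respect to `L` (given the planes `Δ z` containing the
grazes `Σ(L,z)` for `z ∈ bd K`): for every `z ∈ bd K` and every
`w ∈ Π_z ∩ bd K`, where `Π_z` is the plane through the origin parallel to `Δ z`,
the line through `z` and `w` does not meet `L`. -/
def AlmostFree (K L : Set E3) (Δ : E3 → AffineSubspace ℝ E3) : Prop :=
  ∀ z ∈ frontier K, ∀ w ∈ (↑(Δ z).direction : Set E3) ∩ frontier K,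
    Disjoint (lineThrough z w) L

section Helpers


open MeasureTheory Filter Topology

/-- point on the line `m(φ)` -/
def AG (σ : ℝ → ℝ) (φ s : ℝ) : ℝ × ℝ :=
  (σ φ * Real.cos φ - s * Real.sin φ, σ φ * Real.sin φ + s * Real.cos φ)

def AX (P R : ℝ × ℝ → ℝ) (σ : ℝ → ℝ) (φ s : ℝ) : ℝ :=
  -P (AG σ φ s) * Real.sin φ + R (AG σ φ s) * Real.cos φ

def AU (P R : ℝ × ℝ → ℝ) (σ : ℝ → ℝ) (φ s : ℝ) : ℝ :=
  P (AG σ φ s) * Real.cos φ + R (AG σ φ s) * Real.sin φ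

structure AData (G P R : ℝ × ℝ → ℝ) (σ κ h : ℝ → ℝ) : Prop where
  hP : Continuous P
  hR : Continuous R
  sub : ∀ g g' : ℝ × ℝ, G g + P g * (g'.1 - g.1) + R g * (g'.2 - g.2) ≤ G g'
  lip : ∃ C, LipschitzWith C σ
  per : ∀ φ, σ (φ + 2 * Real.pi) = σ φ
  pos : ∀ φ, 0 < σ φ
  conv : ∀ φ ε, 2 * Real.cos ε * σ φ ≤ σ (φ + ε) + σ (φ - ε)
  κper : ∀ φ, κ (φ + 2 * Real.pi) = κ φ
  hper : ∀ φ, h (φ + 2 * Real.pi) = h φ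
  pde : ∀ φ s, AU P R σ φ s + κ φ * AX P R σ φ s = h φ
  nonconst : ∀ φ, ∃ s1 s2, AX P R σ φ s1 ≠ AX P R σ φ s2

lemma const_of_locLip {f : ℝ → ℝ} (hf : LocallyLipschitz f)
    (h0 : ∀ᵐ x, HasDerivAt f 0 x) (a b : ℝ) : f a = f b := by
  obtain ⟨K, hK⟩ := (hf.locallyLipschitzOn (s := uIcc a b)).exists_lipschitzOnWith_of_compact
    isCompact_uIcc
  obtain ⟨C, hC⟩ := hK.absolutelyContinuousOnInterval.const_of_ae_hasDerivAt_zero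
    (h0.mono fun x hx _ => hx)
  rw [hC a (by simp), hC b (by simp)]

namespace AData
variable {G P R : ℝ × ℝ → ℝ} {σ κ h : ℝ → ℝ}

lemma hasFDeriv (D : AData G P R σ κ h) (g : ℝ × ℝ) :
    HasFDerivAt G (P g • ContinuousLinearMap.fst ℝ ℝ ℝ + R g • ContinuousLinearMap.snd ℝ ℝ ℝ) g := by
  rw [hasFDerivAt_iff_isLittleO_nhds_zero, Asymptotics.isLittleO_iff]
  intro c hc
  have h1 : Tendsto (fun v : ℝ × ℝ => |P (g + v) - P g| + |R (g + v) - R g|) (𝓝 0) (𝓝 0) := by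
    have := D.hP; have := D.hR
    have hc : Continuous (fun v : ℝ × ℝ => |P (g + v) - P g| + |R (g + v) - R g|) := by fun_prop
    simpa using hc.tendsto 0
  filter_upwards [h1.eventually (gt_mem_nhds hc)] with v hv
  have a1 := D.sub g (g + v)
  have a2 := D.sub (g + v) g
  simp only [Prod.fst_add, Prod.snd_add] at a1 a2
  simp only [add_apply, smul_apply,
    ContinuousLinearMap.coe_fst', ContinuousLinearMap.coe_snd', smul_eq_mul, Real.norm_eq_abs]
  have n1 : |v.1| ≤ ‖v‖ := norm_fst_le v
  have n2 : |v.2| ≤ ‖v‖ := norm_snd_le v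
  have hb : |G (g + v) - G g - (P g * v.1 + R g * v.2)| ≤
      |P (g + v) - P g| * |v.1| + |R (g + v) - R g| * |v.2| := by
    rw [← abs_mul, ← abs_mul]
    have b1 := le_abs_self ((P (g + v) - P g) * v.1)
    have b2 := le_abs_self ((R (g + v) - R g) * v.2)
    rw [abs_le]
    constructor <;> nlinarith [abs_nonneg ((P (g + v) - P g) * v.1), abs_nonneg ((R (g + v) - R g) * v.2)]
  have : |P (g + v) - P g| * |v.1| + |R (g + v) - R g| * |v.2| ≤
    (|P (g + v) - P g| + |R (g + v) - R g|) * ‖v‖ := by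
    rw [add_mul]; gcongr
  have := mul_le_mul_of_nonneg_right hv.le (norm_nonneg v)
  linarith

lemma contDiffG (D : AData G P R σ κ h) : ContDiff ℝ 1 G := by
  rw [contDiff_one_iff_hasFDerivAt]
  refine ⟨_, ?_, D.hasFDeriv⟩
  have := D.hP; have := D.hR
  fun_prop

lemma contσ (D : AData G P R σ κ h) : Continuous σ := D.lip.choose_spec.continuous

lemma contAG (D : AData G P R σ κ h) : Continuous (fun q : ℝ × ℝ => AG σ q.1 q.2) := by
  have := D.contσ
  unfold AG; fun_prop

lemma contAX (D : AData G P R σ κ h) : Continuous (fun q : ℝ × ℝ => AX P R σ q.1 q.2) := by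
  have := D.contAG; have := D.hP; have := D.hR
  unfold AX; fun_prop

lemma contAU (D : AData G P R σ κ h) : Continuous (fun q : ℝ × ℝ => AU P R σ q.1 q.2) := by
  have := D.contAG; have := D.hP; have := D.hR
  unfold AU; fun_prop

lemma contκ (D : AData G P R σ κ h) : Continuous κ := by
  rw [continuous_iff_continuousAt]
  intro φ0
  obtain ⟨s1, s2, hs⟩ := D.nonconst φ0
  have c1 : ∀ s, Continuous (fun φ => AX P R σ φ s) := fun s =>
    D.contAX.comp (by fun_prop : Continuous fun φ : ℝ => (φ, s))
  have c2 : ∀ s, Continuous (fun φ => AU P R σ φ s) := fun s =>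
    D.contAU.comp (by fun_prop : Continuous fun φ : ℝ => (φ, s))
  have hne : ∀ᶠ φ in 𝓝 φ0, AX P R σ φ s1 - AX P R σ φ s2 ≠ 0 :=
    (((c1 s1).sub (c1 s2)).continuousAt).eventually_ne (sub_ne_zero.2 hs)
  have heq : (fun φ => -(AU P R σ φ s1 - AU P R σ φ s2) / (AX P R σ φ s1 - AX P R σ φ s2))
      =ᶠ[𝓝 φ0] κ := by
    filter_upwards [hne] with φ hφ
    rw [div_eq_iff hφ]
    linarith [D.pde φ s1, D.pde φ s2]
  refine ContinuousAt.congr ?_ heq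
  exact ContinuousAt.div (((c2 s1).sub (c2 s2)).neg.continuousAt)
    (((c1 s1).sub (c1 s2)).continuousAt) (sub_ne_zero.2 hs)

lemma conth (D : AData G P R σ κ h) : Continuous h := by
  have c1 : Continuous (fun φ => AX P R σ φ 0) := 
    D.contAX.comp (by fun_prop : Continuous fun φ : ℝ => (φ, (0:ℝ)))
  have c2 : Continuous (fun φ => AU P R σ φ 0) :=
    D.contAU.comp (by fun_prop : Continuous fun φ : ℝ => (φ, (0:ℝ)))
  have := D.contκ
  have e : h = fun φ => AU P R σ φ 0 + κ φ * AX P R σ φ 0 := by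
    ext φ; rw [D.pde]
  rw [e]; fun_prop

lemma derivW (D : AData G P R σ κ h) (φ s : ℝ) : HasDerivAt (fun s => G (AG σ φ s)) (AX P R σ φ s) s := by
  have h1 : HasDerivAt (fun s => AG σ φ s) (-Real.sin φ, Real.cos φ) s := by
    unfold AG
    refine HasDerivAt.prodMk ?_ ?_
    · simpa using ((hasDerivAt_id s).mul_const (Real.sin φ)).const_sub (σ φ * Real.cos φ)
    · simpa using ((hasDerivAt_id s).mul_const (Real.cos φ)).const_add (σ φ * Real.sin φ)
  refine ((D.hasFDeriv (AG σ φ s)).comp_hasDerivAt s h1).congr_deriv ?_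
  simp [AX]

lemma monoX (D : AData G P R σ κ h) (φ : ℝ) : Monotone (AX P R σ φ) := by
  intro s s' hs
  rcases hs.eq_or_lt with rfl | hs
  · rfl
  have a1 := D.sub (AG σ φ s) (AG σ φ s')
  have a2 := D.sub (AG σ φ s') (AG σ φ s)
  dsimp only [AG, AX] at *
  by_contra hc
  push Not at hc
  nlinarith [mul_pos (sub_pos.2 hs) (sub_pos.2 hc)]

end AData

def Aρ (κ : ℝ → ℝ) (φ : ℝ) : ℝ := Real.exp (∫ t in (0:ℝ)..φ, κ t)
def AHi (σ κ : ℝ → ℝ) (t : ℝ) : ℝ := Aρ κ t * σ t - Aρ κ t * κ t * deriv σ t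
def AH (σ κ : ℝ → ℝ) (φ : ℝ) : ℝ := ∫ t in (0:ℝ)..φ, AHi σ κ t
def AB (κ h : ℝ → ℝ) (φ : ℝ) : ℝ := ∫ t in (0:ℝ)..φ, h t / Aρ κ t

namespace AData
variable {G P R : ℝ × ℝ → ℝ} {σ κ h : ℝ → ℝ}

lemma ρpos (φ : ℝ) : 0 < Aρ κ φ := Real.exp_pos _

lemma ρderiv (D : AData G P R σ κ h) (φ : ℝ) : HasDerivAt (Aρ κ) (κ φ * Aρ κ φ) φ := by
  have := (D.contκ.integral_hasStrictDerivAt 0 φ).hasDerivAt.exp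
  rw [mul_comm]; exact this

lemma ρcont (D : AData G P R σ κ h) : Continuous (Aρ κ) :=
  continuous_iff_continuousAt.2 fun φ => (D.ρderiv φ).continuousAt

lemma ρcd (D : AData G P R σ κ h) : ContDiff ℝ 1 (Aρ κ) := by
  rw [contDiff_one_iff_deriv]
  refine ⟨fun φ => (D.ρderiv φ).differentiableAt, ?_⟩
  have : deriv (Aρ κ) = fun φ => κ φ * Aρ κ φ := by ext φ; exact (D.ρderiv φ).deriv
  rw [this]; exact D.contκ.mul D.ρcont

lemma Bderiv (D : AData G P R σ κ h) (φ : ℝ) : HasDerivAt (AB κ h) (h φ / Aρ κ φ) φ := by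
  have c : Continuous fun t => h t / Aρ κ t :=
    D.conth.div D.ρcont fun t => (ρpos t).ne'
  exact (c.integral_hasStrictDerivAt 0 φ).hasDerivAt

lemma Bcd (D : AData G P R σ κ h) : ContDiff ℝ 1 (AB κ h) := by
  rw [contDiff_one_iff_deriv]
  refine ⟨fun φ => (D.Bderiv φ).differentiableAt, ?_⟩
  have : deriv (AB κ h) = fun φ => h φ / Aρ κ φ := by ext φ; exact (D.Bderiv φ).deriv
  rw [this]; exact D.conth.div D.ρcont fun t => (ρpos t).ne'

lemma Hi_meas (D : AData G P R σ κ h) : Measurable (AHi σ κ) := by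
  have := D.ρcont.measurable; have := D.contσ.measurable; have := D.contκ.measurable
  unfold AHi
  have := measurable_deriv σ
  fun_prop

lemma Hi_bound (D : AData G P R σ κ h) (r : ℝ) : ∃ C, 0 ≤ C ∧ ∀ t, |t| ≤ r → |AHi σ κ t| ≤ C := by
  obtain ⟨C, hC⟩ := D.lip
  have c : Continuous fun t => |Aρ κ t * σ t| + |Aρ κ t * κ t| * C := by
    have := D.ρcont; have := D.contσ; have := D.contκ
    fun_prop
  obtain ⟨M, hM⟩ := (isCompact_Icc (a := -r) (b := r)).bddAbove_image c.continuousOn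
  refine ⟨max M 0, le_max_right _ _, fun t ht => le_max_of_le_left ?_⟩
  refine le_trans ?_ (hM (mem_image_of_mem _ (abs_le.1 ht)))
  unfold AHi
  refine (abs_sub _ _).trans ?_
  have : |deriv σ t| ≤ C := norm_deriv_le_of_lipschitz hC
  rw [abs_mul (Aρ κ t * κ t)]
  gcongr

lemma Hi_locInt (D : AData G P R σ κ h) : LocallyIntegrable (AHi σ κ) volume := by
  rw [MeasureTheory.locallyIntegrable_iff]
  intro k hk
  obtain ⟨r, hr⟩ := hk.isBounded.subset_closedBall 0
  obtain ⟨C, hC0, hC⟩ := D.Hi_bound r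
  refine Measure.integrableOn_of_bounded (M := C) hk.measure_lt_top.ne D.Hi_meas.aestronglyMeasurable ?_
  refine (ae_restrict_iff' hk.measurableSet).2 (Eventually.of_forall fun t ht => hC t ?_)
  simpa using hr ht

lemma Hi_ii (D : AData G P R σ κ h) (a b : ℝ) : IntervalIntegrable (AHi σ κ) volume a b :=
  intervalIntegrable_iff.mpr <|
      (D.Hi_locInt.integrableOn_isCompact isCompact_uIcc).mono_set uIoc_subset_uIcc

lemma Hderiv (D : AData G P R σ κ h) : ∀ᵐ φ, HasDerivAt (AH σ κ) (AHi σ κ φ) φ := by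
  filter_upwards [_root_.LocallyIntegrable.ae_hasDerivAt_integral D.Hi_locInt] with φ hφ using hφ 0

lemma Hlip (D : AData G P R σ κ h) : LocallyLipschitz (AH σ κ) := by
  intro x
  obtain ⟨C, hC0, hC⟩ := D.Hi_bound (|x| + 1)
  refine ⟨C.toNNReal, ball x 1, ball_mem_nhds x one_pos, LipschitzOnWith.of_dist_le_mul ?_⟩
  intro a ha b hb
  rw [dist_eq_norm, dist_eq_norm]
  have : AH σ κ a - AH σ κ b = ∫ t in b..a, AHi σ κ t := by
    unfold AH
    rw [intervalIntegral.integral_interval_sub_left (D.Hi_ii _ _) (D.Hi_ii _ _)]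
  rw [this, Real.coe_toNNReal _ hC0, Real.norm_eq_abs (a - b)]
  refine intervalIntegral.norm_integral_le_of_norm_le_const fun t ht => hC t ?_
  have : t ∈ ball x 1 := by
    have hcv := (convex_ball x (1:ℝ)).ordConnected
    exact hcv.uIcc_subset hb ha (uIoc_subset_uIcc ht)
  rw [mem_ball, Real.dist_eq] at this
  have := abs_sub_abs_le_abs_sub t x
  linarith

end AData


open MeasureTheory Filter Topology

namespace AData
variable {G P R : ℝ × ℝ → ℝ} {σ κ h : ℝ → ℝ}

lemma char_lip (D : AData G P R σ κ h) (c : ℝ) : LocallyLipschitz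
    (fun φ => G (AG σ φ ((c - AH σ κ φ) / Aρ κ φ))) := by
  have h1 : ContDiff ℝ 1 (fun q : ℝ × ℝ × ℝ =>
      G (q.2.1 * Real.cos q.1 - ((c - q.2.2) / Aρ κ q.1) * Real.sin q.1,
        q.2.1 * Real.sin q.1 + ((c - q.2.2) / Aρ κ q.1) * Real.cos q.1)) := by
    have e1 : ContDiff ℝ 1 (fun q : ℝ × ℝ × ℝ => (c - q.2.2) / Aρ κ q.1) := by
      refine ContDiff.div (by fun_prop) (D.ρcd.comp contDiff_fst) fun q => (ρpos _).ne'
    have e2 : ContDiff ℝ 1 (fun q : ℝ × ℝ × ℝ => Real.cos q.1) := 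
      Real.contDiff_cos.comp contDiff_fst
    have e3 : ContDiff ℝ 1 (fun q : ℝ × ℝ × ℝ => Real.sin q.1) := 
      Real.contDiff_sin.comp contDiff_fst
    have e4 : ContDiff ℝ 1 (fun q : ℝ × ℝ × ℝ => q.2.1) := by fun_prop
    exact D.contDiffG.comp (((e4.mul e2).sub (e1.mul e3)).prodMk ((e4.mul e3).add (e1.mul e2)))
  have h2 : LocallyLipschitz (fun φ : ℝ => (φ, σ φ, AH σ κ φ)) :=
    LocallyLipschitz.id.prodMk ((D.lip.choose_spec.locallyLipschitz).prodMk D.Hlip)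
  exact h1.locallyLipschitz.comp h2

lemma char_deriv (D : AData G P R σ κ h) (c φ : ℝ) (hσ : DifferentiableAt ℝ σ φ)
    (hH : HasDerivAt (AH σ κ) (AHi σ κ φ) φ) :
    HasDerivAt (fun φ => G (AG σ φ ((c - AH σ κ φ) / Aρ κ φ)))
      ((deriv σ φ - (c - AH σ κ φ) / Aρ κ φ) * h φ) φ := by
  have hρ := D.ρderiv φ
  have hρ0 := (ρpos (κ := κ) φ).ne'
  have hs := ((hH.const_sub c).div hρ hρ0)
  have hs' : HasDerivAt (fun φ => (c - AH σ κ φ) / Aρ κ φ)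
      (-σ φ + κ φ * deriv σ φ - κ φ * ((c - AH σ κ φ) / Aρ κ φ)) φ := by
    refine hs.congr_deriv ?_
    unfold AHi
    field_simp
    ring
  have hσ' := hσ.hasDerivAt
  have hg : HasDerivAt (fun φ => AG σ φ ((c - AH σ κ φ) / Aρ κ φ)) 
      ((deriv σ φ - (c - AH σ κ φ) / Aρ κ φ) * (Real.cos φ - κ φ * Real.sin φ),
       (deriv σ φ - (c - AH σ κ φ) / Aρ κ φ) * (Real.sin φ + κ φ * Real.cos φ)) φ := by
    unfold AG
    refine HasDerivAt.prodMk ?_ ?_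
    · refine ((hσ'.mul (Real.hasDerivAt_cos φ)).sub (hs'.mul (Real.hasDerivAt_sin φ))).congr_deriv ?_
      ring
    · refine ((hσ'.mul (Real.hasDerivAt_sin φ)).add (hs'.mul (Real.hasDerivAt_cos φ))).congr_deriv ?_
      ring
  refine ((D.hasFDeriv _).comp_hasDerivAt φ hg).congr_deriv ?_
  have := D.pde φ ((c - AH σ κ φ) / Aρ κ φ)
  unfold AU AX at this
  simp only [add_apply, smul_apply,
    ContinuousLinearMap.coe_fst', ContinuousLinearMap.coe_snd', smul_eq_mul]
  rw [← this]
  ring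

lemma char (D : AData G P R σ κ h) (c φ : ℝ) :
    G (AG σ φ ((c - AH σ κ φ) / Aρ κ φ)) - G (AG σ φ ((0 - AH σ κ φ) / Aρ κ φ)) + c * AB κ h φ
     = G (AG σ 0 c) - G (AG σ 0 0) := by
  have hl : LocallyLipschitz (fun φ => 
      G (AG σ φ ((c - AH σ κ φ) / Aρ κ φ)) - G (AG σ φ ((0 - AH σ κ φ) / Aρ κ φ)) + c * AB κ h φ) := by
    have e : ContDiff ℝ 1 (fun q : ℝ × ℝ × ℝ => q.1 - q.2.1 + c * q.2.2) := by fun_prop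
    exact e.locallyLipschitz.comp
      ((D.char_lip c).prodMk ((D.char_lip 0).prodMk D.Bcd.locallyLipschitz))
  have := const_of_locLip hl ?_ φ 0
  · rw [this]
    simp [AH, Aρ, AB]
  · filter_upwards [D.Hderiv, D.lip.choose_spec.ae_differentiableAt_real] with φ hH hσ
    refine (((D.char_deriv c φ hσ hH).sub (D.char_deriv 0 φ hσ hH)).add
      ((D.Bderiv φ).const_mul c)).congr_deriv ?_
    have hρ0 := (ρpos (κ := κ) φ).ne'
    field_simp
    ring

lemma Xform (D : AData G P R σ κ h) (φ s : ℝ) : AX P R σ φ s =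
    Aρ κ φ * (AX P R σ 0 (Aρ κ φ * s + AH σ κ φ) - AB κ h φ) := by
  have hρ0 := (ρpos (κ := κ) φ).ne'
  set c := Aρ κ φ * s + AH σ κ φ with hc
  have hsc : (c - AH σ κ φ) / Aρ κ φ = s := by rw [hc]; field_simp; ring
  have h1 : HasDerivAt (fun c => (c - AH σ κ φ) / Aρ κ φ) (1 / Aρ κ φ) c :=
    ((hasDerivAt_id c).sub_const _).div_const _
  have h2 : HasDerivAt (fun c => G (AG σ φ ((c - AH σ κ φ) / Aρ κ φ)))
      (AX P R σ φ s * (1 / Aρ κ φ)) c := by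
    refine HasDerivAt.comp c (h₂ := fun s => G (AG σ φ s)) ?_ h1
    have := D.derivW φ s
    rwa [hsc]
  have h3 := (h2.sub_const (G (AG σ φ ((0 - AH σ κ φ) / Aρ κ φ)))).add
    ((hasDerivAt_id c).mul_const (AB κ h φ))
  have h4 := (D.derivW 0 c).sub_const (G (AG σ 0 0))
  have e : (fun c => G (AG σ 0 c) - G (AG σ 0 0)) = fun c =>  
    G (AG σ φ ((c - AH σ κ φ) / Aρ κ φ)) - G (AG σ φ ((0 - AH σ κ φ) / Aρ κ φ)) + c * AB κ h φ := by
    ext c; rw [D.char c φ]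
  rw [e] at h4
  have := h3.unique h4
  rw [← this]
  field_simp
  ring

end AData


open MeasureTheory Filter Topology

lemma zero_of_scale {V : ℝ → ℝ} (hV : Continuous V) {r : ℝ} (h0 : 0 < r) (h1 : r < 1)
    (h : ∀ t, V t = r * V (r * t)) (t : ℝ) : V t = 0 := by
  have hn : ∀ n : ℕ, V t = r ^ n * V (r ^ n * t) := by
    intro n
    induction n with
    | zero => simp
    | succ k ih => rw [ih, h (r ^ k * t), pow_succ]; ring_nf
  have l1 : Tendsto (fun n : ℕ => r ^ n) atTop (𝓝 0) := tendsto_pow_atTop_nhds_zero_of_lt_one h0.le h1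
  have l2 : Tendsto (fun n : ℕ => r ^ n * V (r ^ n * t)) atTop (𝓝 (0 * V (0 * t))) :=
    l1.mul ((hV.tendsto _).comp (l1.mul_const t))
  rw [← tendsto_congr hn] at l2
  simpa using tendsto_nhds_unique tendsto_const_nhds l2

lemma const_of_scale {w : ℝ → ℝ} (hw : Continuous w) {r H B : ℝ} (h0 : 0 < r) (h1 : r ≠ 1)
    (h : ∀ s, w s = r * (w (r * s + H) - B)) (a b : ℝ) : w a = w b := by
  have h1' : 1 - r ≠ 0 := fun h => h1 (by linarith)
  set z := H / (1 - r) with hz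
  have hz1 : r * z + H = z := by rw [hz]; field_simp; ring
  have hV : ∀ t, w (z + t) - w z = r * (w (z + r * t) - w z) := by
    intro t
    have e1 := h (z + t)
    have e2 := h z
    rw [hz1] at e2
    rw [show r * (z + t) + H = z + r * t by rw [← hz1]; linear_combination (r) * hz1 ] at e1
    rw [e1]; linear_combination - e2
  have key : ∀ t, w (z + t) - w z = 0 := by
    rcases lt_or_gt_of_ne h1 with hr | hr
    · exact zero_of_scale (V := fun t => w (z + t) - w z) (by fun_prop) h0 hr hV
    · refine zero_of_scale (V := fun t => w (z + t) - w z) (by fun_prop) (inv_pos.2 h0)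
        (inv_lt_one_of_one_lt₀ hr) fun t => ?_
      have := hV (r⁻¹ * t)
      rw [mul_inv_cancel_left₀ h0.ne'] at this
      simp only [this, inv_mul_cancel_left₀ h0.ne']
  have ka := key (a - z)
  have kb := key (b - z)
  simp only [add_sub_cancel] at ka kb
  linarith

lemma periodic_shift {f : ℝ → ℝ} {T : ℝ} (hp : Function.Periodic f T) (ε : ℝ) :
    ∫ φ in (0:ℝ)..T, f (φ + ε) = ∫ φ in (0:ℝ)..T, f φ := by
  have := hp.intervalIntegral_add_eq ε 0
  rw [intervalIntegral.integral_comp_add_right f, zero_add, add_comm T, this, zero_add]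

namespace AData
variable {G P R : ℝ × ℝ → ℝ} {σ κ h : ℝ → ℝ}

lemma wcont (D : AData G P R σ κ h) : Continuous (AX P R σ 0) := 
  D.contAX.comp (by fun_prop : Continuous fun s : ℝ => ((0:ℝ), s))

lemma κint (D : AData G P R σ κ h) (a b : ℝ) : IntervalIntegrable κ volume a b := D.contκ.intervalIntegrable _ _

lemma ρ0 (D : AData G P R σ κ h) : Aρ κ (2 * Real.pi) = 1 := by
  by_contra hne
  obtain ⟨s1, s2, hs⟩ := D.nonconst 0
  refine hs (const_of_scale (H := AH σ κ (2 * Real.pi)) (B := AB κ h (2 * Real.pi))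
    D.wcont (ρpos _) hne (fun s => ?_) s1 s2)
  · rw [← D.Xform]
    have := D.per 0
    rw [zero_add] at this
    simp [AX, AG, this]

lemma ρper (D : AData G P R σ κ h) : Function.Periodic (Aρ κ) (2 * Real.pi) := by
  intro φ
  have h0 := D.ρ0
  unfold Aρ at *
  have hp : Function.Periodic κ (2 * Real.pi) := D.κper
  have := hp.intervalIntegral_add_eq 0 φ
  rw [zero_add] at this
  rw [← intervalIntegral.integral_add_adjacent_intervals (D.κint 0 φ) (D.κint _ _), Real.exp_add,
    ← this, h0, mul_one]

lemma wper (D : AData G P R σ κ h) (s : ℝ) : AX P R σ 0 (s + AH σ κ (2 * Real.pi)) = AX P R σ 0 s + AB κ h (2 * Real.pi) := by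
  have := D.Xform (2 * Real.pi) s
  rw [D.ρ0, one_mul, one_mul] at this
  have e : AX P R σ (2 * Real.pi) s = AX P R σ 0 s := by
    have := D.per 0
    rw [zero_add] at this
    simp [AX, AG, this]
  linarith

lemma Hiper (D : AData G P R σ κ h) : Function.Periodic (AHi σ κ) (2 * Real.pi) := by
  intro φ
  have h1 := D.ρper φ
  have h2 : deriv σ (φ + 2 * Real.pi) = deriv σ φ := by
    rw [← deriv_comp_add_const]
    congr 1; ext t; exact D.per t
  simp only [AHi, h1, h2, D.per, D.κper]

lemma Hper (D : AData G P R σ κ h) (φ : ℝ) : AH σ κ (φ + 2 * Real.pi) = AH σ κ φ + AH σ κ (2 * Real.pi) := by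
  have := D.Hiper.intervalIntegral_add_eq 0 φ
  rw [zero_add] at this
  unfold AH
  rw [← intervalIntegral.integral_add_adjacent_intervals (D.Hi_ii 0 φ) (D.Hi_ii _ _), ← this]

lemma diffbound (D : AData G P R σ κ h) {ε m : ℝ} (hε : 0 < ε) (hm : ∀ φ, m ≤ Aρ κ φ) :
    ∫ φ in (0:ℝ)..(2 * Real.pi), ((Aρ κ (φ + ε) - Aρ κ φ) / ε) * ((σ (φ + ε) - σ φ) / ε) ≤
     ∫ φ in (0:ℝ)..(2 * Real.pi), (Aρ κ φ - m) * σ φ := by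
  have cρ := D.ρcont
  have cσ := D.contσ
  have hpi := Real.two_pi_pos
  have e1 : ∫ φ in (0:ℝ)..(2 * Real.pi), (Aρ κ φ - m) * (σ φ - σ (φ - ε)) =
      ∫ φ in (0:ℝ)..(2 * Real.pi), (Aρ κ (φ + ε) - m) * (σ (φ + ε) - σ φ) := by
    have hp : Function.Periodic (fun φ => (Aρ κ φ - m) * (σ φ - σ (φ - ε))) (2 * Real.pi) := by
      intro φ
      have : σ (φ + 2 * Real.pi - ε) = σ (φ - ε) := by rw [← D.per (φ - ε)]; ring_nf
      simp only [D.ρper φ, D.per, this]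
    rw [← periodic_shift hp ε]
    simp
  have ii : ∀ f : ℝ → ℝ, Continuous f → IntervalIntegrable f volume 0 (2 * Real.pi) :=
    fun f hf => hf.intervalIntegrable _ _
  have e2 : ∫ φ in (0:ℝ)..(2 * Real.pi), ((Aρ κ (φ + ε) - Aρ κ φ) / ε) * ((σ (φ + ε) - σ φ) / ε) =
      (1 / ε ^ 2) * ∫ φ in (0:ℝ)..(2 * Real.pi),
        ((Aρ κ φ - m) * (σ φ - σ (φ - ε)) - (Aρ κ φ - m) * (σ (φ + ε) - σ φ)) := by
    rw [intervalIntegral.integral_sub (ii _ (by fun_prop)) (ii _ (by fun_prop)), e1,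
      ← intervalIntegral.integral_sub (ii _ (by fun_prop)) (ii _ (by fun_prop)),
      ← intervalIntegral.integral_const_mul]
    congr 1; ext φ; field_simp; ring
  rw [e2, ← intervalIntegral.integral_const_mul]
  refine intervalIntegral.integral_mono_on hpi.le (ii _ (by fun_prop)) (ii _ (by fun_prop)) fun φ _ => ?_
  have a1 := D.conv φ ε
  have a2 := Real.one_sub_sq_div_two_le_cos (x := ε)
  have a3 := D.pos φ
  have a4 := sub_nonneg.2 (hm φ)
  have a5 : 2 * σ φ - σ (φ + ε) - σ (φ - ε) ≤ ε ^ 2 * σ φ := by nlinarith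
  rw [one_div, inv_mul_le_iff₀ (by positivity)]
  nlinarith

lemma H0pos (D : AData G P R σ κ h) : 0 < AH σ κ (2 * Real.pi) := by
  have hpi := Real.two_pi_pos
  have cρ := D.ρcont
  have cσ := D.contσ
  have cκ := D.contκ
  obtain ⟨m, hm0, hm⟩ : ∃ m, 0 < m ∧ ∀ φ, m ≤ Aρ κ φ := by
    obtain ⟨φ0, _, h0⟩ := (isCompact_Icc (a := (0:ℝ)) (b := 2 * Real.pi)).exists_isMinOn
      (nonempty_Icc.2 hpi.le) D.ρcont.continuousOn
    refine ⟨Aρ κ φ0, ρpos _, fun φ => ?_⟩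
    obtain ⟨y, hy, he⟩ := D.ρper.exists_mem_Ico₀ hpi φ
    rw [he]
    exact h0 (Ico_subset_Icc_self hy)
  obtain ⟨C, hC⟩ := D.lip
  obtain ⟨C', hC'⟩ := (D.ρcd.locallyLipschitz.locallyLipschitzOn
    (s := Icc 0 (2 * Real.pi + 1))).exists_lipschitzOnWith_of_compact isCompact_Icc
  set e : ℕ → ℝ := fun n => 1 / ((n : ℝ) + 1) with he
  have he0 : ∀ n, 0 < e n := fun n => by simp only [he]; positivity
  have he1 : ∀ n, e n ≤ 1 := fun n => by
    simp only [he]; rw [div_le_one (by positivity)]; linarith [(Nat.cast_nonneg n : (0:ℝ) ≤ n)]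
  have hel : Tendsto e atTop (𝓝 0) := tendsto_one_div_add_atTop_nhds_zero_nat
  have hel' : Tendsto e atTop (𝓝[≠] 0) :=
    tendsto_nhdsWithin_iff.2 ⟨hel, Eventually.of_forall fun n => (he0 n).ne'⟩
  clear_value e
  have key : Tendsto (fun n => ∫ φ in (0:ℝ)..(2 * Real.pi),
      ((Aρ κ (φ + e n) - Aρ κ φ) / e n) * ((σ (φ + e n) - σ φ) / e n)) atTop
      (𝓝 (∫ φ in (0:ℝ)..(2 * Real.pi), (κ φ * Aρ κ φ) * deriv σ φ)) := by
    refine intervalIntegral.tendsto_integral_filter_of_dominated_convergence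
      (fun _ => (C' : ℝ) * C) ?_ ?_ ?_ ?_
    · refine Eventually.of_forall fun n => Continuous.aestronglyMeasurable ?_
      fun_prop
    · refine Eventually.of_forall fun n => Eventually.of_forall fun φ hφ => ?_
      rw [uIoc_of_le hpi.le] at hφ
      have b1 := hC.dist_le_mul (φ + e n) φ
      have b2 := hC'.dist_le_mul (φ + e n) ⟨by linarith [hφ.1, he0 n], by linarith [hφ.2, he1 n]⟩
        φ ⟨hφ.1.le, by linarith [hφ.2]⟩
      rw [Real.dist_eq, Real.dist_eq, add_sub_cancel_left, abs_of_pos (he0 n)] at b1 b2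
      rw [Real.norm_eq_abs, abs_mul, abs_div, abs_div, abs_of_pos (he0 n)]
      have hn := he0 n
      refine mul_le_mul ?_ ?_ (by positivity) (by positivity)
      · rwa [div_le_iff₀ (he0 n)]
      · rwa [div_le_iff₀ (he0 n)]
    · exact intervalIntegrable_const
    · filter_upwards [hC.ae_differentiableAt_real] with φ hφ _
      refine Tendsto.mul ?_ ?_
      · have := (hasDerivAt_iff_tendsto_slope_zero.1 (D.ρderiv φ)).comp hel'
        refine this.congr fun n => ?_
        simp [div_eq_inv_mul]
      · have := (hasDerivAt_iff_tendsto_slope_zero.1 hφ.hasDerivAt).comp hel'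
        refine this.congr fun n => ?_
        simp [div_eq_inv_mul]
  have hle := le_of_tendsto' key fun n => D.diffbound (he0 n) hm
  have ii : ∀ f : ℝ → ℝ, Continuous f → IntervalIntegrable f volume 0 (2 * Real.pi) :=
    fun f hf => hf.intervalIntegrable _ _
  have i1 : IntervalIntegrable (fun φ => (κ φ * Aρ κ φ) * deriv σ φ) volume 0 (2 * Real.pi) := by
    have := (ii (fun φ => Aρ κ φ * σ φ) (by fun_prop)).sub (D.Hi_ii 0 (2 * Real.pi))
    refine IntervalIntegrable.congr (fun φ _ => ?_) this
    simp only [AHi]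
    ring
  have hs : 0 < ∫ φ in (0:ℝ)..(2 * Real.pi), m * σ φ :=
    intervalIntegral.intervalIntegral_pos_of_pos (ii _ (by fun_prop))
      (fun φ => mul_pos hm0 (D.pos φ)) hpi
  have e1 : AH σ κ (2 * Real.pi) = (∫ φ in (0:ℝ)..(2 * Real.pi), (Aρ κ φ - m) * σ φ) +
      (∫ φ in (0:ℝ)..(2 * Real.pi), m * σ φ) -
      ∫ φ in (0:ℝ)..(2 * Real.pi), (κ φ * Aρ κ φ) * deriv σ φ := by
    rw [← intervalIntegral.integral_add (ii _ (by fun_prop)) (ii _ (by fun_prop)),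
      ← intervalIntegral.integral_sub (ii _ (by fun_prop)) i1]
    unfold AH AHi
    congr 1; ext φ; ring
  linarith

end AData


open MeasureTheory Filter Topology

lemma slopeR {f : ℝ → ℝ} {d : ℝ} (hf : HasDerivAt f d 0) (h0 : f 0 = 0) :
    Tendsto (fun η => f η / η) (𝓝[>] 0) (𝓝 d) := by
  have := (hasDerivAt_iff_tendsto_slope_zero.1 hf).mono_left
    (nhdsWithin_mono (0:ℝ) (fun x (hx : 0 < x) => hx.ne'))
  refine this.congr fun η => ?_
  simp [h0, div_eq_inv_mul]

lemma sinR : Tendsto (fun η : ℝ => η / Real.sin η) (𝓝[>] 0) (𝓝 1) := by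
  have := slopeR (by simpa using Real.hasDerivAt_sin 0) Real.sin_zero
  simpa using this.inv₀ one_ne_zero

lemma slopeS {f : ℝ → ℝ} {d : ℝ} (hf : HasDerivAt f d 0) (h0 : f 0 = 0) :
    Tendsto (fun η => f η / Real.sin η) (𝓝[>] 0) (𝓝 d) := by
  have := (slopeR hf h0).mul sinR
  rw [mul_one] at this
  refine this.congr' ?_
  filter_upwards [self_mem_nhdsWithin] with η (hη : 0 < η)
  field_simp

lemma idR : Tendsto (fun η : ℝ => η) (𝓝[>] 0) (𝓝 0) := tendsto_nhdsWithin_of_tendsto_nhds tendsto_id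

lemma lim_eq_of_freq {f g : ℝ → ℝ} {a b : ℝ} {l : Filter ℝ} (hf : Tendsto f l (𝓝 a))
    (hg : Tendsto g l (𝓝 b)) (h : ∃ᶠ x in l, f x = g x) : a = b := by
  by_contra hne
  have := (hf.sub hg).eventually_ne (sub_ne_zero.2 hne)
  exact h (this.mono fun x hx he => hx (by rw [he, sub_self]))

lemma periodic_bdd {f : ℝ → ℝ} (hf : Continuous f) {T : ℝ} (hT : 0 < T)
    (hp : Function.Periodic f T) : ∃ M, ∀ t, |f t| ≤ M := by
  obtain ⟨M, hM⟩ := (isCompact_Icc (a := (0:ℝ)) (b := T)).bddAbove_image hf.abs.continuousOn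
  refine ⟨M, fun t => ?_⟩
  obtain ⟨y, hy, he⟩ := hp.exists_mem_Ico₀ hT t
  rw [he]
  exact hM (mem_image_of_mem (fun x => |f x|) (Ico_subset_Icc_self hy))

lemma additive_bdd {e : ℝ → ℝ} (h : ∀ a t, e (a - t) + e t = e a) {M : ℝ} (hM : ∀ t, |e t| ≤ M)
    (t : ℝ) : e t = 0 := by
  have hn : ∀ n : ℕ, e (n * t) = n * e t := by
    intro n
    induction n with
    | zero => have := h 0 0; simp at this ⊢; linarith
    | succ k ih =>
      have := h ((k + 1 : ℕ) * t) t
      rw [← this]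
      have e1 : ((k + 1 : ℕ) : ℝ) * t - t = k * t := by push_cast; ring
      rw [e1, ih]; push_cast; ring
  by_contra hne
  obtain ⟨n, hn'⟩ := exists_nat_gt (M / |e t|)
  rw [div_lt_iff₀ (abs_pos.2 hne)] at hn'
  have := hM (n * t)
  rw [hn, abs_mul, Nat.abs_cast] at this
  linarith

/-- if `η c → v > 0` as `η → 0+` and `c` is continuous on `(0,π)` then `c` hits
`t + n H` for arbitrarily small `η` -/
lemma freq_hit {c : ℝ → ℝ} {v H : ℝ} (hv : 0 < v) (hH : 0 < H)
    (hc : ContinuousOn c (Ioo 0 Real.pi)) (hl : Tendsto (fun η => η * c η) (𝓝[>] 0) (𝓝 v)) (t : ℝ) :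
    ∃ᶠ η in 𝓝[>] (0:ℝ), ∃ n : ℕ, c η = t + n * H := by
  have hinf : Tendsto c (𝓝[>] 0) atTop := by
    have := hl.pos_mul_atTop hv tendsto_inv_nhdsGT_zero
    refine this.congr' ?_
    filter_upwards [self_mem_nhdsWithin] with η (hη : 0 < η)
    field_simp
  rw [(nhdsGT_basis (0:ℝ)).frequently_iff]
  intro δ hδ
  set δ' := min δ Real.pi / 2 with hδ'
  have p1 : 0 < min δ Real.pi := lt_min hδ Real.pi_pos
  have p2 : 0 < δ' := by positivity
  have p3 : δ' < min δ Real.pi := by rw [hδ']; linarith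
  obtain ⟨n, hn⟩ := exists_nat_ge ((c δ' - t) / H)
  rw [div_le_iff₀ hH] at hn
  obtain ⟨x, hx1, hx2, hx3⟩ : ∃ x, 0 < x ∧ x < δ' ∧ t + n * H ≤ c x := by
    have e1 := hinf.eventually (eventually_ge_atTop (t + n * H))
    have e2 : ∀ᶠ x in 𝓝[>] (0:ℝ), x ∈ Ioo 0 δ' := Ioo_mem_nhdsGT p2
    obtain ⟨x, h1, h2⟩ := (e1.and e2).exists
    exact ⟨x, h2.1, h2.2, h1⟩
  have hsub : Icc x δ' ⊆ Ioo 0 Real.pi := fun y hy =>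
    ⟨hx1.trans_le hy.1, hy.2.trans_lt (p3.trans_le (min_le_right _ _))⟩
  obtain ⟨η, hη, he⟩ := intermediate_value_Icc' hx2.le (hc.mono hsub)
    (show t + n * H ∈ Icc (c δ') (c x) from ⟨by linarith, hx3⟩)
  exact ⟨η, ⟨hx1.trans_le hη.1, hη.2.trans_lt (p3.trans_le (min_le_left _ _))⟩, n, he⟩

namespace AData
variable {G P R : ℝ × ℝ → ℝ} {σ κ h : ℝ → ℝ}

lemma wmono (D : AData G P R σ κ h) : Monotone (AX P R σ 0) := D.monoX 0

lemma wnper (D : AData G P R σ κ h) {T : ℝ} (hT : 0 < T) (hp : Function.Periodic (AX P R σ 0) T) : False := by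
  obtain ⟨s1, s2, hs⟩ := D.nonconst 0
  have key : ∀ a b, AX P R σ 0 a ≤ AX P R σ 0 b := by
    intro a b
    obtain ⟨n, hn⟩ := exists_nat_ge ((a - b) / T)
    rw [div_le_iff₀ hT] at hn
    have := hp.nat_mul n b
    rw [← this]
    exact D.wmono (by linarith)
  exact hs (le_antisymm (key _ _) (key _ _))

lemma B0pos (D : AData G P R σ κ h) : 0 < AB κ h (2 * Real.pi) := by
  have h0 := D.H0pos
  have h1 := D.wper 0
  have h2 := D.wmono (show (0:ℝ) ≤ 0 + AH σ κ (2 * Real.pi) by linarith)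
  have h3 : 0 ≤ AB κ h (2 * Real.pi) := by linarith
  refine lt_of_le_of_ne h3 fun h4 => D.wnper h0 fun s => ?_
  rw [D.wper, ← h4, add_zero]

lemma cross (σ : ℝ → ℝ) (φ η : ℝ) (hη : Real.sin η ≠ 0) :
    AG σ φ (-(σ (φ + Real.pi + η) + σ φ * Real.cos η) / Real.sin η) =
    AG σ (φ + Real.pi + η) ((σ φ + σ (φ + Real.pi + η) * Real.cos η) / Real.sin η) := by
  have e1 : Real.cos (φ + Real.pi + η) = - (Real.cos φ * Real.cos η - Real.sin φ * Real.sin η) := by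
    rw [add_right_comm, Real.cos_add_pi, Real.cos_add]
  have e2 : Real.sin (φ + Real.pi + η) = - (Real.sin φ * Real.cos η + Real.cos φ * Real.sin η) := by
    rw [add_right_comm, Real.sin_add_pi, Real.sin_add]
  have p := Real.sin_sq_add_cos_sq η
  unfold AG
  rw [e1, e2]
  generalize σ (φ + Real.pi + η) = σ2
  generalize Real.sin η = S at *
  generalize Real.cos η = C at *
  ext
  · simp only
    field_simp
    linear_combination (-σ2 * Real.sin φ) * p
  · simp only
    field_simp
    linear_combination (σ2 * Real.cos φ) * p

lemma crossX (D : AData G P R σ κ h) (φ η : ℝ) (hη : Real.sin η ≠ 0) :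
    AX P R σ φ (-(σ (φ + Real.pi + η) + σ φ * Real.cos η) / Real.sin η) =
    - AX P R σ (φ + Real.pi + η) ((σ φ + σ (φ + Real.pi + η) * Real.cos η) / Real.sin η)
      * (Real.cos η - κ (φ + Real.pi + η) * Real.sin η) - h (φ + Real.pi + η) * Real.sin η := by
  rw [← D.pde (φ + Real.pi + η) ((σ φ + σ (φ + Real.pi + η) * Real.cos η) / Real.sin η)]
  unfold AX AU
  rw [cross σ φ η hη]
  have e1 : Real.cos (φ + Real.pi + η) = - (Real.cos φ * Real.cos η - Real.sin φ * Real.sin η) := by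
    rw [add_right_comm, Real.cos_add_pi, Real.cos_add]
  have e2 : Real.sin (φ + Real.pi + η) = - (Real.sin φ * Real.cos η + Real.cos φ * Real.sin η) := by
    rw [add_right_comm, Real.sin_add_pi, Real.sin_add]
  have p := Real.sin_sq_add_cos_sq η
  generalize P _ = p1
  generalize R _ = r1
  rw [e1, e2]
  linear_combination (p1 * Real.sin φ - r1 * Real.cos φ) * p

end AData


open MeasureTheory Filter Topology

def Ak (σ κ h : ℝ → ℝ) : ℝ := AB κ h (2 * Real.pi) / AH σ κ (2 * Real.pi)
def Aπ (P R : ℝ × ℝ → ℝ) (σ κ h : ℝ → ℝ) (c : ℝ) : ℝ := AX P R σ 0 c - Ak σ κ h * c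
def Ac1 (σ κ : ℝ → ℝ) (φ η : ℝ) : ℝ :=
  Aρ κ φ * (-(σ (φ + Real.pi + η) + σ φ * Real.cos η) / Real.sin η) + AH σ κ φ
def Ac2 (σ κ : ℝ → ℝ) (φ η : ℝ) : ℝ :=
  Aρ κ (φ + Real.pi + η) * ((σ φ + σ (φ + Real.pi + η) * Real.cos η) / Real.sin η)
    + AH σ κ (φ + Real.pi + η)

namespace AData
variable {G P R : ℝ × ℝ → ℝ} {σ κ h : ℝ → ℝ}

lemma kpos (D : AData G P R σ κ h) : 0 < Ak σ κ h := div_pos D.B0pos D.H0pos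

lemma πcont (D : AData G P R σ κ h) : Continuous (Aπ P R σ κ h) := by
  have := D.wcont
  unfold Aπ; fun_prop

lemma πper (D : AData G P R σ κ h) : Function.Periodic (Aπ P R σ κ h) (AH σ κ (2 * Real.pi)) := by
  intro c
  have := D.H0pos.ne'
  have e : Ak σ κ h * AH σ κ (2 * Real.pi) = AB κ h (2 * Real.pi) := by
    unfold Ak; field_simp
  unfold Aπ
  rw [D.wper, mul_add, e]; ring

lemma Hcont (D : AData G P R σ κ h) : Continuous (AH σ κ) := D.Hlip.continuous
lemma Bcont (D : AData G P R σ κ h) : Continuous (AB κ h) := D.Bcd.continuous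

/-- limit of a continuous function of `φ + π + η` -/
lemma shiftlim {f : ℝ → ℝ} (hf : Continuous f) (a : ℝ) :
    Tendsto (fun η => f (a + η)) (𝓝[>] 0) (𝓝 (f a)) := by
  have : Continuous fun η => f (a + η) := by fun_prop
  have := this.tendsto 0
  rw [add_zero] at this
  exact tendsto_nhdsWithin_of_tendsto_nhds this

lemma coslim : Tendsto (fun η : ℝ => Real.cos η) (𝓝[>] 0) (𝓝 1) := by
  have := Real.continuous_cos.tendsto 0
  rw [Real.cos_zero] at this
  exact tendsto_nhdsWithin_of_tendsto_nhds this

lemma sinlim : Tendsto (fun η : ℝ => Real.sin η) (𝓝[>] 0) (𝓝 0) := by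
  have := Real.continuous_sin.tendsto 0
  rw [Real.sin_zero] at this
  exact tendsto_nhdsWithin_of_tendsto_nhds this

lemma sinpos : ∀ᶠ η : ℝ in 𝓝[>] 0, 0 < η ∧ Real.sin η ≠ 0 := by
  filter_upwards [Ioo_mem_nhdsGT Real.pi_pos] with η hη
  exact ⟨hη.1, (Real.sin_pos_of_pos_of_lt_pi hη.1 hη.2).ne'⟩

lemma c1lim (D : AData G P R σ κ h) (φ : ℝ) : Tendsto (fun η => η * Ac1 σ κ φ η) (𝓝[>] 0)
    (𝓝 (-(Aρ κ φ * (σ φ + σ (φ + Real.pi))))) := by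
  have h1 := shiftlim D.contσ (φ + Real.pi)
  have h2 := (((h1.add (coslim.const_mul (σ φ))).neg.mul sinR).const_mul (Aρ κ φ)).add
    (idR.mul_const (AH σ κ φ))
  have : Aρ κ φ * (-(σ (φ + Real.pi) + σ φ * 1) * 1) + 0 * AH σ κ φ = 
    -(Aρ κ φ * (σ φ + σ (φ + Real.pi))) := by ring
  rw [this] at h2
  refine h2.congr fun η => ?_
  unfold Ac1
  ring

lemma c2lim (D : AData G P R σ κ h) (φ : ℝ) : Tendsto (fun η => η * Ac2 σ κ φ η) (𝓝[>] 0)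
    (𝓝 (Aρ κ (φ + Real.pi) * (σ φ + σ (φ + Real.pi)))) := by
  have h1 := shiftlim D.contσ (φ + Real.pi)
  have hr := shiftlim D.ρcont (φ + Real.pi)
  have hH := shiftlim D.Hcont (φ + Real.pi)
  have h2 := (hr.mul (((h1.mul coslim).const_add (σ φ)).mul sinR)).add
    (idR.mul hH)
  have : Aρ κ (φ + Real.pi) * ((σ φ + σ (φ + Real.pi) * 1) * 1) + 0 * AH σ κ (φ + Real.pi) = 
    (Aρ κ (φ + Real.pi) * (σ φ + σ (φ + Real.pi))) := by ring
  rw [this] at h2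
  refine h2.congr fun η => ?_
  unfold Ac2
  ring

lemma ηπ (D : AData G P R σ κ h) (c : ℝ → ℝ) : Tendsto (fun η => η * Aπ P R σ κ h (c η)) (𝓝[>] 0) (𝓝 0) := by
  obtain ⟨M, hM⟩ := periodic_bdd D.πcont D.H0pos D.πper
  exact Tendsto.zero_mul_isBoundedUnder_le idR ⟨M, by simpa using Eventually.of_forall fun η => hM (c η)⟩

/-- `Y` asymptotics -/
lemma Ylim (D : AData G P R σ κ h) {c b : ℝ → ℝ} {v b0 : ℝ} (hc : Tendsto (fun η => η * c η) (𝓝[>] 0) (𝓝 v))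
    (hb : Tendsto b (𝓝[>] 0) (𝓝 b0)) :
    Tendsto (fun η => η * (AX P R σ 0 (c η) - b η)) (𝓝[>] 0) (𝓝 (Ak σ κ h * v)) := by
  have := ((D.ηπ c).add (hc.const_mul (Ak σ κ h))).sub (idR.mul hb)
  simp only [zero_add, zero_mul, sub_zero] at this
  refine this.congr fun η => ?_
  unfold Aπ; ring

/-- the crossing relation -/
lemma crossY (D : AData G P R σ κ h) (φ : ℝ) : ∀ᶠ η : ℝ in 𝓝[>] 0,
    Aρ κ φ * (AX P R σ 0 (Ac1 σ κ φ η) - AB κ h φ) =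
    - (Aρ κ (φ + Real.pi + η) * (AX P R σ 0 (Ac2 σ κ φ η) - AB κ h (φ + Real.pi + η)))
      * (Real.cos η - κ (φ + Real.pi + η) * Real.sin η) - h (φ + Real.pi + η) * Real.sin η := by
  filter_upwards [sinpos] with η hη
  have := D.crossX φ η hη.2
  rw [D.Xform, D.Xform (φ + Real.pi + η)] at this
  exact this

lemma ρpi (D : AData G P R σ κ h) (φ : ℝ) : Aρ κ (φ + Real.pi) = Aρ κ φ := by
  have l1 := (D.Ylim (D.c1lim φ) (tendsto_const_nhds (x := AB κ h φ))).const_mul (Aρ κ φ)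
  have l2 := (shiftlim D.ρcont (φ + Real.pi)).mul
    (D.Ylim (D.c2lim φ) (shiftlim D.Bcont (φ + Real.pi)))
  have l3 := ((l2.mul (coslim.sub ((shiftlim D.contκ (φ + Real.pi)).mul sinlim))).neg).sub
    (idR.mul ((shiftlim D.conth (φ + Real.pi)).mul sinlim))
  have l4 := tendsto_nhds_unique (l1.congr' ?_) l3
  · have k := D.kpos
    have hv : 0 < σ φ + σ (φ + Real.pi) := add_pos (D.pos _) (D.pos _)
    have r1 := ρpos (κ := κ) φ
    have r2 := ρpos (κ := κ) (φ + Real.pi)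
    have e : Ak σ κ h * (σ φ + σ (φ + Real.pi)) * (Aρ κ (φ + Real.pi) ^ 2 - Aρ κ φ ^ 2) = 0 := by
      linear_combination l4
    rcases mul_eq_zero.1 e with e | e
    · exact absurd e (mul_pos k hv).ne'
    · exact (pow_left_inj₀ r2.le r1.le two_ne_zero).1 (by linarith)
  · filter_upwards [D.crossY φ] with η hη
    linear_combination η * hη

lemma κpi (D : AData G P R σ κ h) (φ : ℝ) : κ (φ + Real.pi) = κ φ := by
  have h1 := (D.ρderiv (φ + Real.pi)).comp_add_const φ Real.pi
  have e : (fun x => Aρ κ (x + Real.pi)) = Aρ κ := by ext x; exact D.ρpi x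
  rw [e] at h1
  have := h1.unique (D.ρderiv φ)
  rw [D.ρpi] at this
  exact mul_right_cancel₀ (ρpos φ).ne' this

lemma csum (D : AData G P R σ κ h) (φ : ℝ) : Tendsto (fun η => Ac1 σ κ φ η + Ac2 σ κ φ η) (𝓝[>] 0)
    (𝓝 (AH σ κ φ + AH σ κ (φ + Real.pi) + κ φ * Aρ κ φ * (σ φ + σ (φ + Real.pi)))) := by
  have d0 : HasDerivAt (fun η => Aρ κ (φ + Real.pi + η)) (κ φ * Aρ κ φ) 0 := by
    have := (D.ρderiv (φ + Real.pi + 0)).comp_const_add (φ + Real.pi) 0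
    rwa [add_zero, D.ρpi, D.κpi] at this
  have dc := Real.hasDerivAt_cos 0
  rw [Real.sin_zero, neg_zero] at dc
  have t1 := slopeS (f := fun η => Aρ κ (φ + Real.pi + η) - Aρ κ φ * Real.cos η) 
    (d := κ φ * Aρ κ φ) ((d0.sub (dc.const_mul (Aρ κ φ))).congr_deriv (by ring))
    (by simp [D.ρpi])
  have t2 := slopeS (f := fun η => Aρ κ (φ + Real.pi + η) * Real.cos η - Aρ κ φ) 
    (d := κ φ * Aρ κ φ) (((d0.mul dc).sub_const (Aρ κ φ)).congr_deriv (by simp))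
    (by simp [D.ρpi])
  have t3 := ((t1.const_mul (σ φ)).add ((shiftlim D.contσ (φ + Real.pi)).mul t2)).add
    ((shiftlim D.Hcont (φ + Real.pi)).const_add (AH σ κ φ))
  convert t3.congr fun η => ?_ using 2
  · ring
  · unfold Ac1 Ac2; ring

lemma Ysum (D : AData G P R σ κ h) (φ : ℝ) : Tendsto (fun η => (AX P R σ 0 (Ac1 σ κ φ η) - AB κ h φ) +
    (AX P R σ 0 (Ac2 σ κ φ η) - AB κ h (φ + Real.pi + η))) (𝓝[>] 0) (𝓝 0) := by
  have r0 := ρpos (κ := κ) φ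
  have d0 : HasDerivAt (fun η => Aρ κ (φ + Real.pi + η)) (κ φ * Aρ κ φ) 0 := by
    have := (D.ρderiv (φ + Real.pi + 0)).comp_const_add (φ + Real.pi) 0
    rwa [add_zero, D.ρpi, D.κpi] at this
  have dc := Real.hasDerivAt_cos 0
  rw [Real.sin_zero, neg_zero] at dc
  have t1 := slopeR (f := fun η => Aρ κ φ - Aρ κ (φ + Real.pi + η) * Real.cos η) 
    (d := - (κ φ * Aρ κ φ)) (((d0.mul dc).const_sub (Aρ κ φ)).congr_deriv (by simp))
    (by simp [D.ρpi])
  have ts := slopeR (by simpa using Real.hasDerivAt_sin 0) Real.sin_zero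
  have t2 := (shiftlim D.ρcont (φ + Real.pi)).mul ((shiftlim D.contκ (φ + Real.pi)).mul ts)
  rw [D.ρpi, D.κpi] at t2
  have tY := D.Ylim (D.c2lim φ) (shiftlim D.Bcont (φ + Real.pi))
  have t3 := (((tY.mul (t1.add t2)).sub ((shiftlim D.conth (φ + Real.pi)).mul sinlim))).mul_const
    (Aρ κ φ)⁻¹
  have e : (Ak σ κ h * (Aρ κ (φ + Real.pi) * (σ φ + σ (φ + Real.pi))) *
    (-(κ φ * Aρ κ φ) + Aρ κ φ * (κ φ * 1)) - h (φ + Real.pi) * 0) * (Aρ κ φ)⁻¹ = 0 := by ring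
  rw [e] at t3
  refine t3.congr' ?_
  filter_upwards [D.crossY φ, sinpos] with η hη hη0
  have h0 := hη0.1.ne'
  field_simp
  linear_combination -hη

lemma πrel (D : AData G P R σ κ h) (φ : ℝ) : ∃ d, ∀ t, Aπ P R σ κ h
    (AH σ κ φ + AH σ κ (φ + Real.pi) + κ φ * Aρ κ φ * (σ φ + σ (φ + Real.pi)) - t) +
    Aπ P R σ κ h t = d := by
  set C := AH σ κ φ + AH σ κ (φ + Real.pi) + κ φ * Aρ κ φ * (σ φ + σ (φ + Real.pi)) with hC
  refine ⟨AB κ h φ + AB κ h (φ + Real.pi) - Ak σ κ h * C, fun t => ?_⟩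
  have l1 : Tendsto (fun η => Aπ P R σ κ h (Ac1 σ κ φ η) + Aπ P R σ κ h (Ac2 σ κ φ η)) (𝓝[>] 0)
      (𝓝 (AB κ h φ + AB κ h (φ + Real.pi) - Ak σ κ h * C)) := by
    have := ((D.Ysum φ).add ((shiftlim D.Bcont (φ + Real.pi)).const_add (AB κ h φ))).sub
      ((D.csum φ).const_mul (Ak σ κ h))
    rw [zero_add] at this
    refine this.congr fun η => ?_
    unfold Aπ; ring
  have l2 : Tendsto (fun η => Aπ P R σ κ h (Ac1 σ κ φ η + Ac2 σ κ φ η - t) + Aπ P R σ κ h t) (𝓝[>] 0)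
      (𝓝 (Aπ P R σ κ h (C - t) + Aπ P R σ κ h t)) :=
    ((D.πcont.tendsto _).comp ((D.csum φ).sub_const t)).add_const _
  refine lim_eq_of_freq l2 l1 ?_
  have hc : ContinuousOn (Ac2 σ κ φ) (Ioo 0 Real.pi) := by
    have := D.contσ; have := D.ρcont; have := D.Hcont
    unfold Ac2
    refine ContinuousOn.add (ContinuousOn.mul (by fun_prop) (ContinuousOn.div (by fun_prop) (by fun_prop) ?_)) (by fun_prop)
    intro η hη
    exact (Real.sin_pos_of_pos_of_lt_pi hη.1 hη.2).ne'
  have hv : 0 < Aρ κ (φ + Real.pi) * (σ φ + σ (φ + Real.pi)) :=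
    mul_pos (ρpos _) (add_pos (D.pos _) (D.pos _))
  refine (freq_hit hv D.H0pos hc (D.c2lim φ) t).mono ?_
  rintro η ⟨n, hn⟩
  have p1 := (D.πper).nat_mul n t
  have p2 := (D.πper).nat_mul n (Ac1 σ κ φ η)
  rw [hn, p1, ← p2]
  congr 2; ring

lemma πconst (D : AData G P R σ κ h) (t : ℝ) : Aπ P R σ κ h t = Aπ P R σ κ h 0 := by
  obtain ⟨M, hM⟩ := periodic_bdd D.πcont D.H0pos D.πper
  have H0 := D.H0pos
  have := additive_bdd (e := fun t => Aπ P R σ κ h t - Aπ P R σ κ h 0)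
    (M := M + |Aπ P R σ κ h 0|) ?_ (fun t => (abs_sub _ _).trans (by linarith [hM t])) t
  · linarith
  intro a t
  set Cf : ℝ → ℝ := fun φ => AH σ κ φ + AH σ κ (φ + Real.pi) + κ φ * Aρ κ φ * (σ φ + σ (φ + Real.pi))
    with hCf
  have cC : Continuous Cf := by
    have := D.contσ; have := D.ρcont; have := D.Hcont; have := D.contκ
    fun_prop
  have e1 : Cf Real.pi = Cf 0 + AH σ κ (2 * Real.pi) := by
    have k1 := D.κpi 0
    have r1 := D.ρpi 0
    have s1 := D.per 0
    rw [zero_add] at k1 r1 s1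
    have z : AH σ κ 0 = 0 := by simp [AH]
    simp only [hCf, zero_add, k1, r1, z, ← two_mul, s1]
    ring
  obtain ⟨n, hn, -⟩ := existsUnique_add_zsmul_mem_Ico H0 a (Cf 0)
  simp only [zsmul_eq_mul] at hn
  obtain ⟨φ, _, hφ⟩ := intermediate_value_Icc Real.pi_pos.le cC.continuousOn
    (show a + n * AH σ κ (2 * Real.pi) ∈ Icc (Cf 0) (Cf Real.pi) from ⟨hn.1, by rw [e1]; exact hn.2.le⟩)
  obtain ⟨d, hd⟩ := D.πrel φ
  have q : ∀ t, Aπ P R σ κ h (a - t) + Aπ P R σ κ h t = d := by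
    intro t
    rw [← hd t]
    have p2 := (D.πper).int_mul n (a - t)
    rw [← p2]
    congr 2
    simp only [hCf] at hφ
    rw [hφ]; ring
  have q1 := q t
  have q2 := q 0
  rw [sub_zero] at q2
  linarith

/-- Theorem A -/
theorem main (D : AData G P R σ κ h) : ∃ β k, 0 < k ∧ ∀ s, R (σ 0, s) = β + k * s := by
  refine ⟨Aπ P R σ κ h 0, Ak σ κ h, D.kpos, fun s => ?_⟩
  rw [← D.πconst s]
  simp [Aπ, AX, AG]

theorem main' (D : AData G P R σ κ h) : ∃ α β k, 0 < k ∧ (∀ s, R (σ 0, s) = β + k * s) ∧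
    ∀ s, G (σ 0, s) = α + β * s + k / 2 * s ^ 2 := by
  obtain ⟨β, k, hk, hR⟩ := D.main
  refine ⟨G (σ 0, 0), β, k, hk, hR, fun s => ?_⟩
  have hd : ∀ s, HasDerivAt (fun s => G (σ 0, s) - (β * s + k / 2 * s ^ 2)) 0 s := by
    intro s
    have h1 := D.derivW 0 s
    have h2 := ((hasDerivAt_id s).const_mul β).add (((hasDerivAt_id s).pow 2).const_mul (k / 2))
    have h3 := h1.sub h2
    simp only [AG, AX, Real.cos_zero, Real.sin_zero, mul_one, mul_zero, sub_zero, zero_add] at h3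
    refine h3.congr_deriv ?_
    rw [hR]; simp; ring
  have := is_const_of_deriv_eq_zero (fun s => (hd s).differentiableAt) (fun s => (hd s).deriv) s 0
  simp at this
  linarith

end AData


open Filter Topology

lemma frontier_of_support {S : Set E3} {l : E3 →L[ℝ] ℝ} {c : ℝ} (hl : l ≠ 0)
    (hS : ∀ Z ∈ S, l Z ≤ c) {Y : E3} (hY : Y ∈ S) (hc : l Y = c) : Y ∈ frontier S := by
  refine ⟨subset_closure hY, fun hi => hl ?_⟩
  have hm : IsLocalMax l Y := by
    filter_upwards [mem_interior_iff_mem_nhds.1 hi] with Z hZ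
    rw [hc]; exact hS Z hZ
  have := hm.fderiv_eq_zero
  rwa [l.fderiv] at this

lemma zero_of_const {S : Set E3} {l : E3 →L[ℝ] ℝ} {c : ℝ} (hS : ∀ Z ∈ S, l Z = c)
    (hi : (interior S).Nonempty) : l = 0 := by
  by_contra hl
  obtain ⟨Y, hY⟩ := hi
  exact (frontier_of_support hl (fun Z hZ => (hS Z hZ).le) (interior_subset hY)
    (hS Y (interior_subset hY))).2 hY

lemma unique_touch {S : Set E3} (hs : StrictConvex ℝ S) {l : E3 →L[ℝ] ℝ} {c : ℝ} (hl : l ≠ 0)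
    (hS : ∀ Z ∈ S, l Z ≤ c) {Y Y' : E3} (hY : Y ∈ S) (hY' : Y' ∈ S) (h1 : l Y = c) (h2 : l Y' = c) :
    Y = Y' := by
  by_contra hne
  have hi := hs hY hY' hne (a := 1/2) (b := 1/2) (by norm_num) (by norm_num) (by norm_num)
  refine (frontier_of_support hl hS (interior_subset hi) ?_).2 hi
  simp only [map_add, map_smul, smul_eq_mul, h1, h2]; ring

lemma subset_coneGen (L : Set E3) (x : E3) : L ⊆ coneGen L x := fun y hy =>
  ⟨y, hy, 1, zero_le_one, by simp⟩

lemma graze_of_support {L : Set E3} {z : E3} {l : E3 →L[ℝ] ℝ} {c : ℝ} (hl : l ≠ 0)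
    (hS : ∀ Z ∈ L, l Z ≤ c) {Y : E3} (hY : Y ∈ L) (hc : l Y = c) (hz : l z = c) :
    Y ∈ graze L z := by
  refine ⟨frontier_of_support (c := c) hl ?_ (subset_coneGen L z hY) hc, frontier_of_support hl hS hY hc⟩
  rintro _ ⟨y, hy, m, hm, rfl⟩
  simp only [map_add, map_smul, map_sub, smul_eq_mul, hz]
  nlinarith [hS y hy]

lemma convex_coneGen {L : Set E3} (hL : Convex ℝ L) (x : E3) : Convex ℝ (coneGen L x) := by
  rintro _ ⟨y1, hy1, l1, hl1, rfl⟩ _ ⟨y2, hy2, l2, hl2, rfl⟩ α β hα hβ hab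
  have h1 : 0 ≤ α * l1 := mul_nonneg hα hl1
  have h2 : 0 ≤ β * l2 := mul_nonneg hβ hl2
  rcases (add_nonneg h1 h2).eq_or_lt with h0 | h0
  · have e1 : α * l1 = 0 := by linarith
    have e2 : β * l2 = 0 := by linarith
    refine ⟨y1, hy1, 0, le_rfl, ?_⟩
    rw [smul_add, smul_add, smul_smul, smul_smul, e1, e2]; simp only [zero_smul, add_zero]; rw [← add_smul, hab, one_smul]
  · refine ⟨(α * l1 / (α * l1 + β * l2)) • y1 + (β * l2 / (α * l1 + β * l2)) • y2,
      hL hy1 hy2 (by positivity) (by positivity) (by field_simp), α * l1 + β * l2, h0.le, ?_⟩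
    rw [smul_sub (α * l1 + β * l2), smul_add (α * l1 + β * l2), smul_smul (α * l1 + β * l2),
      smul_smul (α * l1 + β * l2), mul_div_cancel₀ _ h0.ne', mul_div_cancel₀ _ h0.ne']
    have : α = 1 - β := by linarith
    subst this
    module

/-- Support functional at a graze point. -/
lemma support_of_graze {L : Set E3} (hLc : IsClosed L) (hL : Convex ℝ L) (h0 : (0 : E3) ∈ interior L)
    {x p : E3} (hp : p ∈ graze L x) : ∃ t : E3 →L[ℝ] ℝ, t p = 1 ∧ t x = 1 ∧ ∀ Z ∈ L, t Z ≤ 1 := by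
  have hpL : p ∈ L := hLc.frontier_subset hp.2
  have hcv := convex_coneGen hL x
  have hne : p ∉ interior (coneGen L x) := hp.1.2
  obtain ⟨l, hl⟩ := geometric_hahn_banach_open_point hcv.interior isOpen_interior hne
  have h0' : (0 : E3) ∈ interior (coneGen L x) := interior_mono (subset_coneGen L x) h0
  have hpos : 0 < l p := by have := hl 0 h0'; rwa [map_zero] at this
  have hall : ∀ Z ∈ coneGen L x, l Z ≤ l p := by
    intro Z hZ
    have hZ' : Z ∈ closure (interior (coneGen L x)) := by
      rw [hcv.closure_interior_eq_closure_of_nonempty_interior ⟨0, h0'⟩]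
      exact subset_closure hZ
    have hcl : IsClosed {Z | l Z ≤ l p} := isClosed_le l.continuous continuous_const
    exact closure_minimal (fun Y hY => (hl Y hY).le) hcl hZ'
  have e1 : l x ≤ l p := hall x ⟨p, hpL, 0, le_rfl, by simp⟩
  have e2 := hall (x + (2:ℝ) • (p - x)) ⟨p, hpL, 2, by norm_num, rfl⟩
  simp only [map_add, map_smul, map_sub, smul_eq_mul] at e2
  have e3 : l x = l p := by linarith
  refine ⟨(l p)⁻¹ • l, ?_, ?_, fun Z hZ => ?_⟩
  · simp [hpos.ne']
  · simp [e3, hpos.ne']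
  · have := hall Z (subset_coneGen L x hZ)
    simp only [smul_apply, smul_eq_mul]
    rw [inv_mul_le_iff₀ hpos]; linarith

/-- Adapted coordinates. -/
lemma exists_coords {t : E3 →L[ℝ] ℝ} {e1 p : E3} (h1 : t e1 = 0) (hp : t p = 1) (he : e1 ≠ 0) :
    ∃ (a b : E3 →L[ℝ] ℝ) (e2 : E3), (∀ Y, Y = a Y • e1 + b Y • e2 + t Y • p) ∧
      a e1 = 1 ∧ b e1 = 0 ∧ a e2 = 0 ∧ b e2 = 1 ∧ t e2 = 0 ∧ a p = 0 ∧ b p = 0 := by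
  have hlt : Submodule.span ℝ ({e1, p} : Set E3) ≠ ⊤ := by
    intro h
    have h2 := finrank_span_le_card (R := ℝ) ({e1, p} : Set E3)
    rw [h, finrank_top, finrank_euclideanSpace, Fintype.card_fin] at h2
    have : ({e1, p} : Set E3).toFinset.card ≤ 2 := by
      rw [Set.toFinset_insert, Set.toFinset_singleton]; exact Finset.card_le_two
    omega
  obtain ⟨f, hf⟩ : ∃ f, f ∉ Submodule.span ℝ ({e1, p} : Set E3) := by
    by_contra hc; push Not at hc
    exact hlt (eq_top_iff.2 fun y _ => hc y)
  set e2 := f - t f • p with he2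
  have ht2 : t e2 = 0 := by simp [he2, hp]
  have hf2 : e2 ∉ Submodule.span ℝ ({e1, p} : Set E3) := by
    intro hc
    apply hf
    have : f = e2 + t f • p := by simp [he2]
    rw [this]
    exact add_mem hc (Submodule.smul_mem _ _ (Submodule.subset_span (by simp)))
  have hli : LinearIndependent ℝ ![e1, e2, p] := by
    rw [Fintype.linearIndependent_iff]
    intro g hg
    simp only [Fin.sum_univ_three, Matrix.cons_val_zero, Matrix.cons_val_one, Matrix.cons_val] at hg
    have g2 : g 2 = 0 := by
      have := congrArg t hg
      simpa [h1, ht2, hp] using this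
    have g1 : g 1 = 0 := by
      by_contra hne
      apply hf2
      have : e2 = (-(g 0) / g 1) • e1 := by
        rw [g2, zero_smul, add_zero] at hg
        rw [neg_div, neg_smul, eq_neg_iff_add_eq_zero, add_comm]
        have h3 := congrArg (fun v => (g 1)⁻¹ • v) hg
        simp only [smul_add, smul_smul, inv_mul_cancel₀ hne, one_smul, smul_zero] at h3
        rwa [div_eq_inv_mul]
      rw [this]
      exact Submodule.smul_mem _ _ (Submodule.subset_span (by simp))
    have g0 : g 0 = 0 := by
      rw [g2, g1, zero_smul, zero_smul, add_zero, add_zero] at hg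
      exact (smul_eq_zero.1 hg).resolve_right he
    intro i; fin_cases i <;> assumption
  set B := basisOfLinearIndependentOfCardEqFinrank hli (by simp) with hB
  have hB' : ⇑B = ![e1, e2, p] := coe_basisOfLinearIndependentOfCardEqFinrank _ _
  have b0 : B 0 = e1 := by rw [hB']; rfl
  have b1 : B 1 = e2 := by rw [hB']; rfl
  have b2 : B 2 = p := by rw [hB']; rfl
  have hrep : ∀ Y, Y = B.repr Y 0 • e1 + B.repr Y 1 • e2 + B.repr Y 2 • p := by
    intro Y
    conv_lhs => rw [← B.sum_repr Y]
    rw [Fin.sum_univ_three, b0, b1, b2]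
  refine ⟨LinearMap.toContinuousLinearMap (B.coord 0), LinearMap.toContinuousLinearMap (B.coord 1),
    e2, fun Y => ?_, ?_, ?_, ?_, ?_, ht2, ?_, ?_⟩
  · have h3 : t Y = B.repr Y 2 := by
      have := congrArg t (hrep Y)
      simpa [h1, ht2, hp] using this
    rw [h3]
    exact hrep Y
  all_goals simp only [LinearMap.coe_toContinuousLinearMap', Module.Basis.coord_apply]
  · rw [← b0]; simp
  · rw [← b0]; simp
  · rw [← b1]; simp
  · rw [← b1]; simp
  · rw [← b2]; simp
  · rw [← b2]; simp


open Filter Topology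

lemma exists_touch {L : Set E3} (hLc : IsCompact L) {a b t : E3 →L[ℝ] ℝ} {p : E3}
    (hp : t p = 1) (hap : a p = 0) (hbp : b p = 0) (ht : ∀ Z ∈ L, Z ≠ p → t Z < 1)
    {Y0 : E3} (hY0 : Y0 ∈ L) (hY0p : Y0 ≠ p) (g : ℝ × ℝ) :
    ∃ Y ∈ L, t Y < 1 ∧ ∀ Z ∈ L, g.1 * a Z + g.2 * b Z - 1 ≤
      ((g.1 * a Y + g.2 * b Y - 1) / (1 - t Y)) * (1 - t Z) := by
  set n : E3 → ℝ := fun Z => g.1 * a Z + g.2 * b Z - 1 with hn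
  have hnc : Continuous n := by fun_prop
  set γ := n Y0 / (1 - t Y0) with hγ
  have d0 : 0 < 1 - t Y0 := by linarith [ht Y0 hY0 hY0p]
  set S := L ∩ {Z | γ * (1 - t Z) ≤ n Z} with hS
  have hSc : IsCompact S := hLc.inter_right (isClosed_le (by fun_prop) hnc)
  have hSp : ∀ Z ∈ S, 0 < 1 - t Z := by
    intro Z hZ
    by_cases h : Z = p
    · have := hZ.2
      rw [h] at this
      simp only [mem_setOf_eq, hp, hap, hbp, hn] at this
      linarith
    · linarith [ht Z hZ.1 h]
  have hY0S : Y0 ∈ S := ⟨hY0, by simp only [mem_setOf_eq, hγ]; rw [div_mul_cancel₀ _ d0.ne']⟩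
  obtain ⟨Y, hYS, hY⟩ := hSc.exists_isMaxOn ⟨Y0, hY0S⟩ (f := fun Z => n Z / (1 - t Z))
    (hnc.continuousOn.div (by fun_prop) fun Z hZ => (hSp Z hZ).ne')
  refine ⟨Y, hYS.1, by linarith [hSp Y hYS], fun Z hZ => ?_⟩
  change n Z ≤ n Y / (1 - t Y) * (1 - t Z)
  by_cases h : Z ∈ S
  · have := hY h
    rw [mem_setOf_eq, div_le_iff₀ (hSp Z h)] at this
    exact this
  · have h1 : n Z < γ * (1 - t Z) := by
      by_contra hc
      exact h ⟨hZ, not_lt.1 hc⟩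
    have h2 : γ ≤ n Y / (1 - t Y) := hY hY0S
    have h3 : 0 ≤ 1 - t Z := by
      by_cases h : Z = p
      · rw [h, hp]; simp
      · linarith [ht Z hZ h]
    nlinarith [mul_le_mul_of_nonneg_right h2 h3]

lemma exists_G {L : Set E3} (hLc : IsCompact L) (hLs : StrictConvex ℝ L) {a b t : E3 →L[ℝ] ℝ} {p : E3}
    (hpL : p ∈ L) (hp : t p = 1) (hap : a p = 0) (hbp : b p = 0) (ht : ∀ Z ∈ L, Z ≠ p → t Z < 1)
    {Y0 : E3} (hY0 : Y0 ∈ L) (hY0p : Y0 ≠ p) :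
    ∃ (G P R : ℝ × ℝ → ℝ) (Yf : ℝ × ℝ → E3), Continuous P ∧ Continuous R ∧
      (∀ g g' : ℝ × ℝ, G g + P g * (g'.1 - g.1) + R g * (g'.2 - g.2) ≤ G g') ∧
      ∀ g, Yf g ∈ L ∧ t (Yf g) < 1 ∧ a (Yf g) = P g * (1 - t (Yf g)) ∧ b (Yf g) = R g * (1 - t (Yf g)) ∧
       g.1 * a (Yf g) + g.2 * b (Yf g) - 1 = G g * (1 - t (Yf g)) ∧
       ∀ Z ∈ L, g.1 * a Z + g.2 * b Z - 1 ≤ G g * (1 - t Z) := by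
  choose Yf hYL hYt hYm using exists_touch hLc hp hap hbp ht hY0 hY0p
  set G : ℝ × ℝ → ℝ := fun g => (g.1 * a (Yf g) + g.2 * b (Yf g) - 1) / (1 - t (Yf g)) with hG
  have hd : ∀ g, 0 < 1 - t (Yf g) := fun g => by linarith [hYt g]
  have hGe : ∀ g, g.1 * a (Yf g) + g.2 * b (Yf g) - 1 = G g * (1 - t (Yf g)) := fun g => by
    simp only [hG]; rw [div_mul_cancel₀ _ (hd g).ne']
  have hle1 : ∀ Z ∈ L, 0 ≤ 1 - t Z := by
    intro Z hZ
    by_cases h : Z = p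
    · rw [h, hp]; simp
    · linarith [ht Z hZ h]
  -- graph
  have graph : ∀ (g : ℝ × ℝ) (Y : E3), Y ∈ L → (∀ Z ∈ L, (g.1 * a Z + g.2 * b Z - 1) * (1 - t Y) ≤
      (g.1 * a Y + g.2 * b Y - 1) * (1 - t Z)) → Y = Yf g := by
    intro g Y hY hm
    have hYp : Y ≠ p := by
      rintro rfl
      have := hm Y0 hY0
      rw [hp, hap, hbp] at this
      linarith [ht Y0 hY0 hY0p]
    have hdY : 0 < 1 - t Y := by linarith [ht Y hY hYp]
    have h1 := hm (Yf g) (hYL g)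
    rw [hGe] at h1
    have h2 := hYm g Y hY
    change _ ≤ G g * _ at h2
    have h3 : g.1 * a Y + g.2 * b Y - 1 = G g * (1 - t Y) := by
      refine le_antisymm h2 ?_
      have := hd g
      by_contra hc
      push Not at hc
      nlinarith [mul_lt_mul_of_pos_right hc this]
    have hl0 : g.1 • a + g.2 • b + G g • t ≠ 0 := by
      intro h0
      have e1 := congrArg (fun f : E3 →L[ℝ] ℝ => f Y) h0
      have e2 := congrArg (fun f : E3 →L[ℝ] ℝ => f p) h0
      simp only [add_apply, smul_apply, zero_apply, smul_eq_mul, hp, hap, hbp] at e1 e2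
      nlinarith
    refine unique_touch hLs (l := g.1 • a + g.2 • b + G g • t) (c := 1 + G g) hl0 ?_ hY (hYL g) ?_ ?_
    · intro Z hZ
      have := hYm g Z hZ
      change _ ≤ G g * _ at this
      simp only [add_apply, smul_apply, smul_eq_mul]
      linarith
    · simp only [add_apply, smul_apply, smul_eq_mul]
      linarith
    · have := hGe g
      simp only [add_apply, smul_apply, smul_eq_mul]
      linarith
  have hYc : Continuous Yf := by
    rw [continuous_iff_isClosed]
    intro C hC
    haveI : CompactSpace L := isCompact_iff_compactSpace.1 hLc
    have e : Yf ⁻¹' C = Prod.fst '' {q : (ℝ × ℝ) × L | (q.2 : E3) ∈ C ∧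
        ∀ Z ∈ L, (q.1.1 * a Z + q.1.2 * b Z - 1) * (1 - t q.2) ≤
          (q.1.1 * a q.2 + q.1.2 * b q.2 - 1) * (1 - t Z)} := by
      ext g
      constructor
      · intro hg
        refine ⟨(g, ⟨Yf g, hYL g⟩), ⟨hg, fun Z hZ => ?_⟩, rfl⟩
        have := hYm g Z hZ
        change _ ≤ G g * _ at this
        simp only
        rw [hGe]
        nlinarith [mul_le_mul_of_nonneg_right this (hd g).le]
      · rintro ⟨⟨g', Y⟩, ⟨h1, h2⟩, rfl⟩
        simp only at h1 h2
        rw [mem_preimage, ← graph g' Y Y.2 h2]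
        exact h1
    rw [e]
    refine isClosedMap_fst_of_compactSpace _ ?_
    have hcl : IsClosed {q : (ℝ × ℝ) × L |
        ∀ Z ∈ L, (q.1.1 * a Z + q.1.2 * b Z - 1) * (1 - t q.2) ≤
          (q.1.1 * a q.2 + q.1.2 * b q.2 - 1) * (1 - t Z)} := by
      simp only [ofPred_forall]
      exact isClosed_iInter fun Z => isClosed_iInter fun _ => isClosed_le (by fun_prop) (by fun_prop)
    exact (hC.preimage (by fun_prop : Continuous fun q : (ℝ × ℝ) × L => (q.2 : E3))).inter hcl
  refine ⟨G, fun g => a (Yf g) / (1 - t (Yf g)), fun g => b (Yf g) / (1 - t (Yf g)), Yf, ?_, ?_, ?_, ?_⟩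
  · exact Continuous.div (by fun_prop) (by fun_prop) fun g => (hd g).ne'
  · exact Continuous.div (by fun_prop) (by fun_prop) fun g => (hd g).ne'
  · intro g g'
    have h1 := hYm g' (Yf g) (hYL g)
    change _ ≤ G g' * _ at h1
    have h2 := hGe g
    have h3 := hd g
    refine le_of_mul_le_mul_right ?_ h3
    refine le_trans (le_of_eq ?_) h1
    field_simp
    linear_combination -h2
  · intro g
    exact ⟨hYL g, hYt g, by rw [div_mul_cancel₀ _ (hd g).ne'], by rw [div_mul_cancel₀ _ (hd g).ne'],
      hGe g, hYm g⟩


open Filter Topology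

lemma exists_sigma {K : Set E3} (hKc : IsCompact K) (hK : Convex ℝ K) {p : E3} (hp : p ∈ interior K)
    {e1 e2 : E3} {a b : E3 →L[ℝ] ℝ} (h1 : a e1 = 1) (h2 : b e1 = 0) (h3 : a e2 = 0) (h4 : b e2 = 1) :
    ∃ σ : ℝ → ℝ, (∃ C, LipschitzWith C σ) ∧ (∀ φ, σ (φ + 2 * Real.pi) = σ φ) ∧ (∀ φ, 0 < σ φ) ∧
      (∀ φ ε, 2 * Real.cos ε * σ φ ≤ σ (φ + ε) + σ (φ - ε)) ∧
      (∀ φ, p + (σ φ)⁻¹ • (Real.cos φ • e1 + Real.sin φ • e2) ∈ frontier K) ∧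
      (p + e1 ∈ frontier K → σ 0 = 1) := by
  set K' : Set E3 := (Homeomorph.addLeft p) ⁻¹' K with hK'
  have hcv : Convex ℝ K' := by
    have := hK.translate_preimage_right p
    exact this
  have hKin : interior K' = (Homeomorph.addLeft p) ⁻¹' (interior K) :=
    ((Homeomorph.addLeft p).preimage_interior K).symm
  have hfr : frontier K' = (Homeomorph.addLeft p) ⁻¹' (frontier K) :=
    ((Homeomorph.addLeft p).preimage_frontier K).symm
  have h0 : K' ∈ 𝓝 (0 : E3) := by
    rw [← mem_interior_iff_mem_nhds, hKin]
    simpa using hp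
  have hbd : Bornology.IsBounded K' := by
    have : IsCompact K' := (Homeomorph.addLeft p).isCompact_preimage.2 hKc
    exact this.isBounded
  have habs : Absorbent ℝ K' := absorbent_nhds_zero h0
  set u : ℝ → E3 := fun φ => Real.cos φ • e1 + Real.sin φ • e2 with hu
  have hu0 : ∀ φ, u φ ≠ 0 := by
    intro φ h
    have ha := congrArg a h
    have hb := congrArg b h
    simp only [hu, map_add, map_smul, h1, h2, h3, h4, smul_eq_mul, map_zero] at ha hb
    have := Real.sin_sq_add_cos_sq φ
    nlinarith
  have hpos : ∀ φ, 0 < gauge K' (u φ) := fun φ =>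
    (gauge_pos habs (NormedSpace.isVonNBounded_of_isBounded ℝ hbd)).2 (hu0 φ)
  refine ⟨fun φ => gauge K' (u φ), ?_, ?_, hpos, ?_, ?_, ?_⟩
  · obtain ⟨C, hC⟩ := hcv.lipschitz_gauge h0
    have hul : LipschitzWith (‖e1‖₊ + ‖e2‖₊) u := by
      refine LipschitzWith.of_dist_le_mul fun φ ψ => ?_
      rw [dist_eq_norm, Real.dist_eq]
      have e : u φ - u ψ = (Real.cos φ - Real.cos ψ) • e1 + (Real.sin φ - Real.sin ψ) • e2 := by
        simp only [hu]; module
      have k1 : |Real.cos φ - Real.cos ψ| ≤ |φ - ψ| := by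
        have := Real.lipschitzWith_cos.dist_le_mul φ ψ
        simpa [Real.dist_eq] using this
      have k2 : |Real.sin φ - Real.sin ψ| ≤ |φ - ψ| := by
        have := Real.lipschitzWith_sin.dist_le_mul φ ψ
        simpa [Real.dist_eq] using this
      rw [e]
      refine (norm_add_le _ _).trans ?_
      rw [norm_smul, norm_smul, Real.norm_eq_abs, Real.norm_eq_abs]
      push_cast
      nlinarith [norm_nonneg e1, norm_nonneg e2]
    exact ⟨_, hC.comp hul⟩
  · intro φ; simp [hu]
  · intro φ ε
    rcases le_or_gt 0 (Real.cos ε) with hc | hc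
    · have e : u (φ + ε) + u (φ - ε) = (2 * Real.cos ε) • u φ := by
        simp only [hu, Real.cos_add, Real.cos_sub, Real.sin_add, Real.sin_sub]; module
      have := gauge_add_le hcv habs (u (φ + ε)) (u (φ - ε))
      rw [e, gauge_smul_of_nonneg (by positivity)] at this
      exact this
    · have := hpos φ
      have := hpos (φ + ε)
      have := hpos (φ - ε)
      nlinarith
  · intro φ
    have : (gauge K' (u φ))⁻¹ • u φ ∈ frontier K' := by
      rw [← gauge_eq_one_iff_mem_frontier hcv h0, gauge_smul_of_nonneg (by have := hpos φ; positivity)]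
      exact inv_mul_cancel₀ (hpos φ).ne'
    rw [hfr] at this
    exact this
  · intro h
    have : e1 ∈ frontier K' := by rw [hfr]; exact h
    simpa [hu] using (gauge_eq_one_iff_mem_frontier hcv h0).2 this

lemma AX_nonconst {L : Set E3} (hLi : (interior L).Nonempty) {a b t : E3 →L[ℝ] ℝ} {e1 e2 : E3}
    (h1 : a e1 = 1) (h2 : b e1 = 0) (h3 : a e2 = 0) (h4 : b e2 = 1) (h5 : t e1 = 0) (h6 : t e2 = 0)
    {G P R : ℝ × ℝ → ℝ}
    (sub : ∀ g g' : ℝ × ℝ, G g + P g * (g'.1 - g.1) + R g * (g'.2 - g.2) ≤ G g')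
    (hG : ∀ g : ℝ × ℝ, ∀ Z ∈ L, g.1 * a Z + g.2 * b Z - 1 ≤ G g * (1 - t Z)) (σ : ℝ → ℝ) (φ : ℝ) :
    ∃ s1 s2, AX P R σ φ s1 ≠ AX P R σ φ s2 := by
  by_contra hcon
  push Not at hcon
  set β := AX P R σ φ 0 with hβ
  have hX : ∀ s, AX P R σ φ s = β := fun s => hcon s 0
  have hs : ∀ s, G (AG σ φ s) = G (AG σ φ 0) + β * s := by
    intro s
    have k1 := sub (AG σ φ 0) (AG σ φ s)
    have k2 := sub (AG σ φ s) (AG σ φ 0)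
    have k3 := hX s
    have k4 := hX 0
    simp only [AX] at k3 k4
    have q1 : (AG σ φ s).1 - (AG σ φ 0).1 = - s * Real.sin φ := by simp only [AG]; ring
    have q2 : (AG σ φ s).2 - (AG σ φ 0).2 = s * Real.cos φ := by simp only [AG]; ring
    have q3 : (AG σ φ 0).1 - (AG σ φ s).1 = s * Real.sin φ := by simp only [AG]; ring
    have q4 : (AG σ φ 0).2 - (AG σ φ s).2 = - s * Real.cos φ := by simp only [AG]; ring
    rw [q1, q2] at k1
    rw [q3, q4] at k2
    have k5 : s * (-P (AG σ φ s) * Real.sin φ + R (AG σ φ s) * Real.cos φ) = s * β := by rw [k3]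
    have k6 : s * (-P (AG σ φ 0) * Real.sin φ + R (AG σ φ 0) * Real.cos φ) = s * β := by rw [k4]
    apply le_antisymm
    · linarith
    · linarith
  have hl : (-Real.sin φ) • a + Real.cos φ • b + β • t = 0 := by
    refine zero_of_const (c := β) (fun Z hZ => ?_) hLi
    simp only [add_apply, smul_apply, smul_eq_mul]
    set w := -Real.sin φ * a Z + Real.cos φ * b Z - β * (1 - t Z) with hw
    set c0 := σ φ * Real.cos φ * a Z + σ φ * Real.sin φ * b Z - 1 - G (AG σ φ 0) * (1 - t Z) with hc0
    have hall : ∀ s, c0 + s * w ≤ 0 := by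
      intro s
      have := hG (AG σ φ s) Z hZ
      rw [hs] at this
      simp only [AG] at this
      simp only [hw, hc0, AG]
      linarith
    have : w = 0 := by
      by_contra hne
      have := hall ((1 - c0) / w)
      rw [div_mul_cancel₀ _ hne] at this
      linarith
    linarith
  have k1 := congrArg (fun f : E3 →L[ℝ] ℝ => f e1) hl
  have k2 := congrArg (fun f : E3 →L[ℝ] ℝ => f e2) hl
  simp only [add_apply, smul_apply, smul_eq_mul, h1, h2, h3, h4, h5, h6, zero_apply] at k1 k2
  have := Real.sin_sq_add_cos_sq φ
  nlinarith

lemma exists_normal {V : Submodule ℝ E3} (h : Module.finrank ℝ V = 2) :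
    ∃ N : E3 →ₗ[ℝ] ℝ, N ≠ 0 ∧ ∀ v ∈ V, N v = 0 := by
  have hlt : V < ⊤ := by
    rw [lt_top_iff_ne_top]
    rintro rfl
    simp at h
  obtain ⟨N, hN, hV⟩ := Submodule.exists_le_ker_of_lt_top V hlt
  exact ⟨N, hN, fun v hv => hV hv⟩

/-- Theorem B. -/
lemma theoremB {K L : Set E3}
    (hKcomp : IsCompact K) (hKconv : Convex ℝ K)
    (hLcomp : IsCompact L) (hLconv : Convex ℝ L) (h0 : (0 : E3) ∈ interior L)
    (hLstrict : StrictConvex ℝ L)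
    (hLK : L ⊆ interior K)
    (Δ : E3 → AffineSubspace ℝ E3)
    (hΔ : ∀ z ∈ frontier K, IsPlane (Δ z) ∧ graze L z ⊆ (Δ z : Set E3))
    {x p : E3} (hx : x ∈ frontier K) (hpx : p ∈ graze L x) :
    ∃ (a b t : E3 →L[ℝ] ℝ) (k : ℝ), 0 < k ∧ (∀ v, a v = 0 → b v = 0 → t v = 0 → v = 0) ∧
      a (p - x) = -1 ∧ b (p - x) = 0 ∧ t p = 1 ∧ t x = 1 ∧ (∀ Z ∈ L, Z ≠ p → t Z < 1) ∧
      (∀ s, ∀ Z ∈ L, a (Z - x) + s * b (Z - x) + (k / 2) * s ^ 2 * t (Z - x) ≤ 0) ∧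
      ∀ s, ∃ Y ∈ L, t (Y - x) < 0 ∧ b (Y - x) = - k * s * t (Y - x) ∧
        a (Y - x) = (k / 2) * s ^ 2 * t (Y - x) := by
  have hpL : p ∈ L := hLcomp.isClosed.frontier_subset hpx.2
  have hxL : x ∉ L := fun h => hx.2 (hLK h)
  obtain ⟨t, htp, htx, htL⟩ := support_of_graze hLcomp.isClosed hLconv h0 hpx
  have ht0 : t ≠ 0 := by rintro rfl; simp at htp
  have htlt : ∀ Z ∈ L, Z ≠ p → t Z < 1 := fun Z hZ hne =>
    lt_of_le_of_ne (htL Z hZ) fun h => hne (unique_touch hLstrict ht0 htL hZ hpL h htp)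
  have he : x - p ≠ 0 := fun h => hxL (by rw [sub_eq_zero.1 h]; exact hpL)
  obtain ⟨a, b, e2, hco, h1, h2, h3, h4, h6, hap, hbp⟩ :=
    exists_coords (t := t) (e1 := x - p) (p := p) (by rw [map_sub, htp, htx, sub_self]) htp he
  have h5 : t (x - p) = 0 := by rw [map_sub, htp, htx, sub_self]
  set e1 := x - p with he1
  have h0p : (0 : E3) ≠ p := by rintro rfl; simp at htp
  obtain ⟨G, P, R, Yf, hP, hR, sub, hY⟩ := exists_G hLcomp hLstrict hpL htp hap hbp htlt
    (interior_subset h0) h0p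
  obtain ⟨σ, hlip, hper, hpos, hconv, hfr, hσ0⟩ := exists_sigma hKcomp hKconv (hLK hpL) h1 h2 h3 h4
  have hσ0 : σ 0 = 1 := hσ0 (by rw [he1]; simpa using hx)
  have hnc := AX_nonconst (P := P) (R := R) ⟨0, h0⟩ h1 h2 h3 h4 h5 h6 sub
    (fun g Z hZ => (hY g).2.2.2.2.2 Z hZ) σ
  have hpde : ∀ φ, ∃ κ h : ℝ, ∀ s, AU P R σ φ s + κ * AX P R σ φ s = h := by
    intro φ
    set x' := p + (σ φ)⁻¹ • (Real.cos φ • e1 + Real.sin φ • e2) with hx'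
    have hcs := Real.sin_sq_add_cos_sq φ
    have hax : a x' = (σ φ)⁻¹ * Real.cos φ := by simp [hx', hap, h1, h3, -map_sub]
    have hbx : b x' = (σ φ)⁻¹ * Real.sin φ := by simp [hx', hbp, h2, h4, -map_sub]
    have htx' : t x' = 1 := by simp [hx', htp, h5, h6, -map_sub]
    obtain ⟨hpl, hgr⟩ := hΔ x' (hfr φ)
    have hpg : p ∈ graze L x' := graze_of_support ht0 htL hpL htp htx'
    obtain ⟨N, hN0, hN⟩ := exists_normal hpl
    have key : ∀ s, P (AG σ φ s) * N e1 + R (AG σ φ s) * N e2 = N p := by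
      intro s
      obtain ⟨y1, y2, y3, y4, y5, y6⟩ := hY (AG σ φ s)
      set Y := Yf (AG σ φ s)
      have hgx : (AG σ φ s).1 * a x' + (AG σ φ s).2 * b x' = 1 := by
        rw [hax, hbx]
        have := (hpos φ).ne'
        simp only [AG]
        field_simp
        linear_combination (σ φ) * hcs
      have hl0 : (AG σ φ s).1 • a + (AG σ φ s).2 • b + G (AG σ φ s) • t ≠ 0 := by
        intro hl
        have k1 := congrArg (fun f : E3 →L[ℝ] ℝ => f p) hl
        have k2 := congrArg (fun f : E3 →L[ℝ] ℝ => f x') hl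
        simp only [add_apply, smul_apply, smul_eq_mul, hap, hbp, htp, htx', zero_apply] at k1 k2
        linarith
      have hYg : Y ∈ graze L x' := by
        refine graze_of_support (c := 1 + G (AG σ φ s)) hl0 (fun Z hZ => ?_) y1 ?_ ?_
        · have := y6 Z hZ
          simp only [add_apply, smul_apply, smul_eq_mul]
          linarith
        · simp only [add_apply, smul_apply, smul_eq_mul]
          linarith
        · simp only [add_apply, smul_apply, smul_eq_mul, htx']
          linarith
      have hNd : N (Y - p) = 0 :=
        hN _ (AffineSubspace.vsub_mem_direction (hgr hYg) (hgr hpg))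
      rw [map_sub] at hNd
      have hNY : N Y = a Y * N e1 + b Y * N e2 + t Y * N p := by
        conv_lhs => rw [hco Y]
        simp only [map_add, map_smul, smul_eq_mul]
      have : (1 - t Y) * (P (AG σ φ s) * N e1 + R (AG σ φ s) * N e2 - N p) = 0 := by
        rw [y3, y4] at hNY
        linarith
      rcases mul_eq_zero.1 this with h | h
      · linarith
      · linarith
    have key2 : ∀ s, AU P R σ φ s * (Real.cos φ * N e1 + Real.sin φ * N e2) +
        AX P R σ φ s * (-Real.sin φ * N e1 + Real.cos φ * N e2) = N p := by
      intro s
      rw [← key s]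
      simp only [AU, AX]
      linear_combination (P (AG σ φ s) * N e1 + R (AG σ φ s) * N e2) * hcs
    set nu := Real.cos φ * N e1 + Real.sin φ * N e2 with hnu
    set nj := -Real.sin φ * N e1 + Real.cos φ * N e2 with hnj
    have hnu0 : nu ≠ 0 := by
      intro h
      rw [h] at key2
      have hj : nj = 0 := by
        by_contra hj
        obtain ⟨s1, s2, hs⟩ := hnc φ
        apply hs
        have := key2 s1
        rw [← key2 s2] at this
        simpa [hj] using this
      have q1 : N e1 = 0 := by
        have : N e1 = Real.cos φ * nu - Real.sin φ * nj := by
          rw [hnu, hnj]; linear_combination -(N e1) * hcs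
        rw [this, h, hj]; simp
      have q2 : N e2 = 0 := by
        have : N e2 = Real.sin φ * nu + Real.cos φ * nj := by
          rw [hnu, hnj]; linear_combination -(N e2) * hcs
        rw [this, h, hj]; simp
      have q3 : N p = 0 := by
        have := key2 0
        rw [hj] at this
        linarith
      apply hN0
      ext Y
      rw [hco Y]
      simp [q1, q2, q3, -map_sub]
    refine ⟨nj / nu, N p / nu, fun s => ?_⟩
    rw [eq_div_iff hnu0, add_mul, mul_right_comm, div_mul_cancel₀ _ hnu0]
    linarith [key2 s]
  choose κ h hpde using hpde
  have hpp : ∀ φ, κ (φ + 2 * Real.pi) = κ φ ∧ h (φ + 2 * Real.pi) = h φ := by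
    intro φ
    obtain ⟨s1, s2, hs⟩ := hnc φ
    have eG : ∀ s, AG σ (φ + 2 * Real.pi) s = AG σ φ s := fun s => by simp [AG, hper]
    have eX : ∀ s, AX P R σ (φ + 2 * Real.pi) s = AX P R σ φ s := fun s => by simp [AX, eG]
    have eU : ∀ s, AU P R σ (φ + 2 * Real.pi) s = AU P R σ φ s := fun s => by simp [AU, eG]
    have k1 := hpde φ s1
    have k2 := hpde φ s2
    have k3 := hpde (φ + 2 * Real.pi) s1
    have k4 := hpde (φ + 2 * Real.pi) s2
    rw [eX, eU] at k3 k4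
    have : (κ (φ + 2 * Real.pi) - κ φ) * (AX P R σ φ s1 - AX P R σ φ s2) = 0 := by
      linear_combination k3 - k4 - k1 + k2
    have hk : κ (φ + 2 * Real.pi) = κ φ := by
      rcases mul_eq_zero.1 this with h | h
      · linarith
      · exact absurd (sub_eq_zero.1 h) hs
    exact ⟨hk, by rw [← k1, ← k3, hk]⟩
  have D : AData G P R σ κ h := ⟨hP, hR, sub, hlip, hper, hpos, hconv, fun φ => (hpp φ).1,
    fun φ => (hpp φ).2, hpde, hnc⟩
  obtain ⟨α, β, k, hk, hR1, hG1⟩ := D.main'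
  rw [hσ0] at hR1 hG1
  have hax : a x = 1 := by
    have : x = e1 + p := by rw [he1]; simp
    rw [this, map_add, h1, hap, add_zero]
  have hbx : b x = 0 := by
    have : x = e1 + p := by rw [he1]; simp
    rw [this, map_add, h2, hbp, add_zero]
  refine ⟨a + α • t, b + β • t, t, k, hk, ?_, ?_, ?_, htp, htx, htlt, ?_, ?_⟩
  · intro v v1 v2 v3
    simp only [add_apply, smul_apply, smul_eq_mul, v3, mul_zero, add_zero] at v1 v2
    rw [hco v, v1, v2, v3]; simp
  · simp only [add_apply, smul_apply, smul_eq_mul, map_sub, hap, hax, htp, htx]; ring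
  · simp only [add_apply, smul_apply, smul_eq_mul, map_sub, hbp, hbx, htp, htx]; ring
  · intro s Z hZ
    have := (hY (1, s)).2.2.2.2.2 Z hZ
    rw [hG1] at this
    simp only [add_apply, smul_apply, smul_eq_mul, map_sub, hax, hbx, htx]
    simp only at this
    linarith
  · intro s
    obtain ⟨y1, y2, y3, y4, y5, y6⟩ := hY (1, s)
    refine ⟨Yf (1, s), y1, ?_, ?_, ?_⟩
    · rw [map_sub, htx]; linarith
    · rw [hR1] at y4
      simp only [add_apply, smul_apply, smul_eq_mul, map_sub, hbx, htx]
      linarith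
    · rw [hR1] at y4
      rw [hG1] at y5
      simp only at y5
      simp only [add_apply, smul_apply, smul_eq_mul, map_sub, hax, htx]
      linear_combination y5 - s * y4


open Filter Topology AffineSubspace

/-- The data produced by Theorem B. -/
structure QD (L : Set E3) (x p : E3) (a b t : E3 →L[ℝ] ℝ) (k : ℝ) : Prop where
  hk : 0 < k
  sep : ∀ v, a v = 0 → b v = 0 → t v = 0 → v = 0
  ap : a (p - x) = -1
  bp : b (p - x) = 0
  tp : t p = 1
  tx : t x = 1
  lt : ∀ Z ∈ L, Z ≠ p → t Z < 1
  le : ∀ s, ∀ Z ∈ L, a (Z - x) + s * b (Z - x) + (k / 2) * s ^ 2 * t (Z - x) ≤ 0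
  tch : ∀ s, ∃ Y ∈ L, t (Y - x) < 0 ∧ b (Y - x) = - k * s * t (Y - x) ∧
        a (Y - x) = (k / 2) * s ^ 2 * t (Y - x)
  pL : p ∈ L
  hL : Convex ℝ L

/-- The bilinear form of the quadratic cone. -/
def BQ (a b t : E3 →L[ℝ] ℝ) (k : ℝ) (v : E3) : E3 →L[ℝ] ℝ :=
  (k * a v) • t + (k * t v) • a - (b v) • b

lemma BQ_apply (a b t : E3 →L[ℝ] ℝ) (k : ℝ) (v w : E3) :
    BQ a b t k v w = k * (a v * t w + t v * a w) - b v * b w := by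
  simp only [BQ, add_apply, sub_apply, smul_apply, smul_eq_mul]; ring

namespace QD
variable {L : Set E3} {x p : E3} {a b t : E3 →L[ℝ] ℝ} {k : ℝ}

lemma tf (D : QD L x p a b t k) : t (p - x) = 0 := by rw [map_sub, D.tp, D.tx, sub_self]

lemma graze_of (D : QD L x p a b t k) {s : ℝ} {Y : E3} (hY : Y ∈ L)
    (h2 : b (Y - x) = - k * s * t (Y - x)) (h3 : a (Y - x) = (k / 2) * s ^ 2 * t (Y - x)) {w : E3}
    (hw : a (w - x) + s * b (w - x) + (k / 2) * s ^ 2 * t (w - x) = 0) : Y ∈ graze L w := by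
  have e : ∀ Z, (a + s • b + ((k / 2) * s ^ 2) • t) Z =
      (a (Z - x) + s * b (Z - x) + (k / 2) * s ^ 2 * t (Z - x)) +
        (a + s • b + ((k / 2) * s ^ 2) • t) x := by
    intro Z
    simp only [add_apply, smul_apply, smul_eq_mul, map_sub]; ring
  refine graze_of_support (l := a + s • b + ((k / 2) * s ^ 2) • t)
    (c := (a + s • b + ((k / 2) * s ^ 2) • t) x) ?_ ?_ hY ?_ ?_
  · intro h
    have := congrArg (fun f : E3 →L[ℝ] ℝ => f (p - x)) h
    simp only [add_apply, smul_apply, smul_eq_mul, D.ap, D.bp, D.tf, zero_apply] at this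
    norm_num at this
  · intro Z hZ
    rw [e Z]
    linarith [D.le s Z hZ]
  · rw [e Y, h2, h3]; ring
  · rw [e w, hw]; ring

lemma null (D : QD L x p a b t k) {v : E3} (hv : t v ≠ 0) (hQ : BQ a b t k v v = 0) :
    ∃ μ : ℝ, μ * t v < 0 ∧ x + μ • v ∈ L ∧ x + μ • v ∈ graze L x := by
  have hk := D.hk
  rw [BQ_apply] at hQ
  obtain ⟨Y, hY, h1, h2, h3⟩ := D.tch (-(b v) / (k * t v))
  have hav : a v = b v ^ 2 / (2 * k * t v) := by
    field_simp
    linarith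
  have key : Y = x + (t (Y - x) / t v) • v := by
    have : Y - x - (t (Y - x) / t v) • v = 0 := by
      apply D.sep
      · rw [map_sub _ (Y - x), h3, map_smul, hav, smul_eq_mul]
        field_simp
        ring
      · rw [map_sub _ (Y - x), h2, map_smul, smul_eq_mul]
        field_simp
        ring
      · rw [map_sub _ (Y - x), map_smul, smul_eq_mul]
        field_simp
        ring
    rw [← sub_eq_zero.1 this]; abel
  refine ⟨t (Y - x) / t v, ?_, ?_, ?_⟩
  · rw [div_mul_cancel₀ _ hv]; exact h1
  · rw [← key]; exact hY
  · rw [← key]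
    exact D.graze_of hY h2 h3 (by simp)

lemma neg_of_miss (D : QD L x p a b t k) {v : E3} (hv : v ≠ 0) (hm : ∀ μ : ℝ, x + μ • v ∉ L) :
    BQ a b t k v v < 0 := by
  have hk := D.hk
  by_contra hQ
  push Not at hQ
  by_cases ht : t v = 0
  · rw [BQ_apply, ht] at hQ
    have hb : b v = 0 := by nlinarith
    have ha : a v ≠ 0 := fun ha => hv (D.sep v ha hb ht)
    apply hm (-(a v)⁻¹)
    have : p - x - (-(a v)⁻¹) • v = 0 := by
      apply D.sep
      · rw [map_sub _ (p - x), D.ap, map_smul, smul_eq_mul]; field_simp; ring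
      · rw [map_sub _ (p - x), D.bp, map_smul, hb]; simp
      · rw [map_sub _ (p - x), D.tf, map_smul, ht]; simp
    have e : x + (-(a v)⁻¹) • v = p := by rw [← sub_eq_zero.1 this]; abel
    rw [e]; exact D.pL
  · set Q := BQ a b t k v v with hQd
    set τ := -Q / (2 * k * t v) with hτ
    have htn : t (v - τ • (p - x)) = t v := by
      rw [map_sub _ v, map_smul, D.tf]; simp
    obtain ⟨μ, h1, h2, -⟩ := D.null (v := v - τ • (p - x)) (by rw [htn]; exact ht) (by
      rw [BQ_apply, htn]
      rw [BQ_apply] at hQd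
      simp only [map_sub _ v, map_smul, D.ap, D.bp, smul_eq_mul]
      have : τ * (2 * k * t v) = -Q := by rw [hτ]; field_simp
      linear_combination this - hQd)
    rw [htn] at h1
    have hμτ : 0 ≤ μ * τ := by
      have : μ * τ = (-(μ * t v)) * Q / (2 * k * (t v) ^ 2) := by rw [hτ]; field_simp
      rw [this]
      have : 0 < (t v)^2 := by positivity
      have : 0 ≤ -(μ * t v) := by linarith
      positivity
    have hpos : 0 < 1 + μ * τ := by linarith
    apply hm (μ / (1 + μ * τ))
    have hLc : Convex ℝ L := D.hL
    have := hLc h2 D.pL (a := 1 / (1 + μ * τ)) (b := μ * τ / (1 + μ * τ)) (by positivity)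
      (by positivity) (by field_simp)
    convert this using 1
    have hx : x = (1 / (1 + μ * τ)) • x + (μ * τ / (1 + μ * τ)) • x := by
      rw [← add_smul]
      have : 1 / (1 + μ * τ) + μ * τ / (1 + μ * τ) = 1 := by field_simp
      rw [this, one_smul]
    have e : ∀ c : ℝ, c • x + (μ * c) • v =
        c • (x + μ • (v - τ • (p - x))) + (μ * τ * c) • p - (μ * τ * c) • x := by
      intro c; module
    have e2 := e (1 / (1 + μ * τ))
    rw [mul_one_div, mul_one_div] at e2
    calc x + (μ / (1 + μ * τ)) • v = ((1 / (1 + μ * τ)) • x + (μ / (1 + μ * τ)) • v) +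
        (μ * τ / (1 + μ * τ)) • x := by nth_rewrite 1 [hx]; abel
      _ = _ := by rw [e2]; abel

lemma two_points (D : QD L x p a b t k) (hpx : p ∈ graze L x) {w : E3}
    (hQ : BQ a b t k (w - x) (w - x) < 0) :
    ∃ P1 P2, P1 ≠ P2 ∧ P1 ∈ graze L x ∧ P2 ∈ graze L x ∧ P1 ∈ graze L w ∧ P2 ∈ graze L w ∧
      BQ a b t k (P1 - P2) (w - x) = 0 := by
  have hk := D.hk
  have hB : ∀ (s : ℝ) (Y : E3), b (Y - x) = - k * s * t (Y - x) → a (Y - x) = (k / 2) * s ^ 2 * t (Y - x) →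
      a (w - x) + s * b (w - x) + (k / 2) * s ^ 2 * t (w - x) = 0 → BQ a b t k (Y - x) (w - x) = 0 := by
    intro s Y h1 h2 h3
    rw [BQ_apply, h1, h2]
    linear_combination k * t (Y - x) * h3
  have hsub : ∀ P1 P2 : E3, BQ a b t k (P1 - x) (w - x) = 0 → BQ a b t k (P2 - x) (w - x) = 0 →
      BQ a b t k (P1 - P2) (w - x) = 0 := by
    intro P1 P2 h1 h2
    rw [BQ_apply] at *
    simp only [map_sub] at *
    linear_combination h1 - h2
  rw [BQ_apply] at hQ
  by_cases ht : t (w - x) = 0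
  · rw [ht] at hQ
    have hb : b (w - x) ≠ 0 := by
      intro hb; rw [hb] at hQ; simp at hQ
    set s := - a (w - x) / b (w - x) with hs
    have hA : a (w - x) + s * b (w - x) + (k / 2) * s ^ 2 * t (w - x) = 0 := by
      rw [ht, hs]; field_simp; ring
    obtain ⟨Y, hY, h1, h2, h3⟩ := D.tch s
    refine ⟨Y, p, ?_, D.graze_of hY h2 h3 (by simp), hpx, D.graze_of hY h2 h3 hA, ?_, ?_⟩
    · rintro rfl
      rw [D.tf] at h1; exact lt_irrefl _ h1
    · refine graze_of_support (l := t) (c := 1) ?_ ?_ D.pL D.tp ?_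
      · intro h; have := D.tp; rw [h] at this; simp at this
      · intro Z hZ
        by_cases h : Z = p
        · rw [h, D.tp]
        · exact (D.lt Z hZ h).le
      · rw [map_sub, D.tx] at ht; linarith
    · refine hsub _ _ (hB s Y h2 h3 hA) ?_
      rw [BQ_apply, D.ap, D.bp, D.tf, ht]; simp
  · set A := a (w - x)
    set B := b (w - x)
    set T := t (w - x)
    set r := Real.sqrt (B ^ 2 - 2 * k * A * T) with hr
    have hd : 0 < B ^ 2 - 2 * k * A * T := by nlinarith
    have hr0 : 0 < r := Real.sqrt_pos.2 hd
    have hr2 : r ^ 2 = B ^ 2 - 2 * k * A * T := Real.sq_sqrt hd.le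
    have root : ∀ q : ℝ, q ^ 2 = B ^ 2 - 2 * k * A * T →
        A + ((-B + q) / (k * T)) * B + (k / 2) * ((-B + q) / (k * T)) ^ 2 * T = 0 := by
      intro q hq
      field_simp
      linear_combination hq
    have hA1 := root r hr2
    have hA2 := root (-r) (by rw [neg_sq]; exact hr2)
    obtain ⟨Y1, hY1, h1, h2, h3⟩ := D.tch ((-B + r) / (k * T))
    obtain ⟨Y2, hY2, g1, g2, g3⟩ := D.tch ((-B + -r) / (k * T))
    refine ⟨Y1, Y2, ?_, D.graze_of hY1 h2 h3 (by simp), D.graze_of hY2 g2 g3 (by simp),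
      D.graze_of hY1 h2 h3 hA1, D.graze_of hY2 g2 g3 hA2, hsub _ _ (hB _ _ h2 h3 hA1) (hB _ _ g2 g3 hA2)⟩
    rintro rfl
    rw [h2] at g2
    have := mul_right_cancel₀ h1.ne g2
    field_simp at this
    linarith

lemma nondeg (D : QD L x p a b t k) {d : E3} (h : ∀ y, BQ a b t k d y = 0) : d = 0 := by
  have hk := D.hk
  have htd : t d = 0 := by
    have := h (p - x)
    rw [BQ_apply, D.ap, D.bp, D.tf] at this
    have : k * t d = 0 := by linarith
    simpa [hk.ne'] using this
  have had : a d = 0 := by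
    obtain ⟨Y, hY, h1, h2, h3⟩ := D.tch 0
    have := h (Y - x)
    rw [BQ_apply, h2, htd] at this
    have : k * a d * t (Y - x) = 0 := by linarith
    simpa [hk.ne', h1.ne, -map_sub] using this
  have hbd : b d = 0 := by
    obtain ⟨Y, hY, h1, h2, h3⟩ := D.tch 1
    have := h (Y - x)
    rw [BQ_apply, h2, htd, had] at this
    have : k * b d * t (Y - x) = 0 := by linarith
    simpa [hk.ne', h1.ne, -map_sub] using this
  exact D.sep d had hbd htd

end QD

lemma exists_normal' {V : Submodule ℝ E3} (h : Module.finrank ℝ V = 2) :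
    ∃ N : E3 →ₗ[ℝ] ℝ, ∀ v, v ∈ V ↔ N v = 0 := by
  obtain ⟨N, hN, hV⟩ := exists_normal h
  have hle : V ≤ LinearMap.ker N := fun v hv => hV v hv
  have hlt : LinearMap.ker N ≠ ⊤ := fun h => hN (LinearMap.ker_eq_top.1 h)
  have h3 := Submodule.finrank_lt hlt
  rw [finrank_euclideanSpace_fin] at h3
  have := Submodule.eq_of_le_of_finrank_le hle (by omega)
  refine ⟨N, fun v => ?_⟩
  rw [this]; simp

lemma parallel_of {V : Submodule ℝ E3} (h : Module.finrank ℝ V = 2) {W : Submodule ℝ E3} {d d' v : E3}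
    (hd : d ∈ V) (hd' : d' ∈ V) (hdW : d ∈ W) (hdW' : d' ∈ W) (hv : v ∈ V) (hvW : v ∉ W) (h0 : d ≠ 0) :
    ∃ c : ℝ, d' = c • d := by
  by_contra hc
  push Not at hc
  have hli : LinearIndependent ℝ ![d, d'] := by
    rw [LinearIndependent.pair_iff' h0]
    intro c hcc; exact hc c hcc.symm
  have hsp : Submodule.span ℝ (Set.range ![d, d']) = V := by
    refine Submodule.eq_of_le_of_finrank_eq ?_ ?_
    · rw [Submodule.span_le]
      rintro _ ⟨i, rfl⟩
      fin_cases i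
      · exact hd
      · exact hd'
    · rw [finrank_span_eq_card hli, h]; simp
  apply hvW
  rw [← hsp] at hv
  refine (Submodule.span_le.2 ?_) hv
  rintro _ ⟨i, rfl⟩
  fin_cases i
  · exact hdW
  · exact hdW'

lemma graze_neg {L : Set E3} (hLc : IsClosed L) (hL : Convex ℝ L) (h0 : (0 : E3) ∈ interior L)
    (hs : L = -L) {w q : E3} (hq : q ∈ graze L (-w)) : -q ∈ graze L w := by
  obtain ⟨t, h1, h2, h3⟩ := support_of_graze hLc hL h0 hq
  have hneg : ∀ Z ∈ L, -Z ∈ L := fun Z hZ => by rw [hs]; simpa using hZ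
  refine graze_of_support (l := -t) (c := 1) ?_ ?_ (hneg _ (hLc.frontier_subset hq.2)) ?_ ?_
  · intro h
    have h' : t = 0 := neg_eq_zero.1 h
    rw [h'] at h1; simp at h1
  · intro Z hZ
    have := h3 _ (hneg Z hZ)
    simpa using this
  · simpa using h1
  · simpa using h2

lemma zero_mem_int {L : Set E3} (hL : Convex ℝ L) (hi : (interior L).Nonempty) (hs : L = -L) :
    (0 : E3) ∈ interior L := by
  obtain ⟨y, hy⟩ := hi
  have hy' : -y ∈ interior L := by
    have e : interior L = -interior L := by
      conv_lhs => rw [hs]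
      exact ((Homeomorph.neg E3).preimage_interior L).symm
    rw [e]; simpa using hy
  have := hL.interior hy hy' (a := 1/2) (b := 1/2) (by norm_num) (by norm_num) (by norm_num)
  simpa using this

lemma frontier_neg' {K : Set E3} (hs : K = -K) {x : E3} (hx : x ∈ frontier K) : -x ∈ frontier K := by
  have e : frontier K = -frontier K := by
    conv_lhs => rw [hs]
    exact ((Homeomorph.neg E3).preimage_frontier K).symm
  rw [e]; simpa using hx

lemma exists_scale {K : Set E3} (hKc : IsCompact K) (hK : Convex ℝ K) (h0 : (0 : E3) ∈ interior K)
    {v : E3} (hv : v ≠ 0) : ∃ r : ℝ, r ≠ 0 ∧ r • v ∈ frontier K := by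
  have hn : K ∈ 𝓝 (0 : E3) := mem_interior_iff_mem_nhds.1 h0
  have hpos : 0 < gauge K v :=
    (gauge_pos (absorbent_nhds_zero hn) (NormedSpace.isVonNBounded_of_isBounded ℝ hKc.isBounded)).2 hv
  refine ⟨(gauge K v)⁻¹, by positivity, ?_⟩
  rw [← gauge_eq_one_iff_mem_frontier hK hn, gauge_smul_of_nonneg (by positivity)]
  exact inv_mul_cancel₀ hpos.ne'

lemma mem_lineThrough {x y q : E3} : q ∈ lineThrough x y ↔ ∃ r : ℝ, q = x + r • (y - x) := by
  unfold lineThrough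
  rw [SetLike.mem_coe, mem_affineSpan_pair_iff_exists_lineMap_eq]
  constructor
  · rintro ⟨r, rfl⟩
    exact ⟨r, by rw [AffineMap.lineMap_apply, vsub_eq_sub, vadd_eq_add, add_comm]⟩
  · rintro ⟨r, rfl⟩
    exact ⟨r, by rw [AffineMap.lineMap_apply, vsub_eq_sub, vadd_eq_add, add_comm]⟩

theorem final_thm
    (K L : Set E3)
    (hKcomp : IsCompact K) (hKconv : Convex ℝ K) (hKint : (interior K).Nonempty)
    (hKsym : K = -K)
    (hLcomp : IsCompact L) (hLconv : Convex ℝ L) (hLint : (interior L).Nonempty)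
    (hLsym : L = -L) (hLstrict : StrictConvex ℝ L)
    (hLK : L ⊆ interior K)
    (Δ : E3 → AffineSubspace ℝ E3)
    (hΔ : ∀ z ∈ frontier K, IsPlane (Δ z) ∧ graze L z ⊆ (Δ z : Set E3))
    (hAF : AlmostFree K L Δ) :
    ∀ x ∈ frontier K, ∃ Ox : E3,
      lineThrough x (-x) ∩ (Δ x : Set E3) = {Ox} ∧
      ∀ p ∈ graze L x, (2 : ℝ) • Ox - p ∈ graze L x := by
  have h0L := zero_mem_int hLconv hLint hLsym
  have h0K := zero_mem_int hKconv hKint hKsym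
  have hnot : ∀ z ∈ frontier K, z ∉ (Δ z).direction := by
    intro z hz hmem
    have := hAF z hz (-z) ⟨(Δ z).direction.neg_mem hmem, frontier_neg' hKsym hz⟩
    refine Set.disjoint_left.1 this (?_ : (0 : E3) ∈ _) (interior_subset h0L)
    rw [mem_lineThrough]
    exact ⟨1/2, by module⟩
  intro x hx
  obtain ⟨hpl, hgr⟩ := hΔ x hx
  obtain ⟨N, hN⟩ := exists_normal' hpl
  have hNx : N x ≠ 0 := fun h => hnot x hx ((hN x).2 h)
  have hne : ∃ q0, q0 ∈ Δ x := by
    by_contra hcon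
    have : Δ x = ⊥ := by
      rw [← AffineSubspace.coe_eq_bot_iff, Set.eq_empty_iff_forall_notMem]
      intro q hq; exact hcon ⟨q, hq⟩
    unfold IsPlane at hpl
    rw [this, AffineSubspace.direction_bot] at hpl
    simp at hpl
  obtain ⟨q0, hq0⟩ := hne
  have hmem : ∀ y, y ∈ Δ x ↔ N y = N q0 := by
    intro y
    rw [← AffineSubspace.vsub_right_mem_direction_iff_mem hq0, hN, vsub_eq_sub, map_sub, sub_eq_zero]
  set lam := N q0 / N x with hlam
  have hlamN : lam * N x = N q0 := div_mul_cancel₀ _ hNx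
  refine ⟨lam • x, ?_, ?_⟩
  · ext y
    rw [mem_inter_iff, mem_lineThrough, SetLike.mem_coe, hmem, mem_singleton_iff]
    constructor
    · rintro ⟨⟨r, rfl⟩, h⟩
      have e : x + r • (-x - x) = (1 - 2 * r) • x := by module
      rw [e] at h ⊢
      rw [map_smul, smul_eq_mul, ← hlamN] at h
      rw [mul_right_cancel₀ hNx h]
    · rintro rfl
      exact ⟨⟨(1 - lam) / 2, by module⟩, by rw [map_smul, smul_eq_mul, hlamN]⟩
  intro p hp
  have hpL : p ∈ L := hLcomp.isClosed.frontier_subset hp.2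
  obtain ⟨a, b, t, k, hk, h1, h2, h3, h4, h5, h6, h7, h8⟩ :=
    theoremB hKcomp hKconv hLcomp hLconv h0L hLstrict hLK Δ hΔ hx hp
  have D : QD L x p a b t k := ⟨hk, h1, h2, h3, h4, h5, h6, h7, h8, hpL, hLconv⟩
  have Bsymm : ∀ v w, BQ a b t k v w = BQ a b t k w v := by
    intro v w; rw [BQ_apply, BQ_apply]; ring
  -- two tangent points
  have pts : ∀ w ∈ (Δ x).direction, w ∈ frontier K → ∃ P1 P2, P1 ≠ P2 ∧ P1 ∈ graze L x ∧
      P2 ∈ graze L x ∧ P1 ∈ graze L w ∧ P2 ∈ graze L w ∧ BQ a b t k (P1 - P2) (w - x) = 0 := by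
    intro w hwD hwK
    apply D.two_points hp
    apply D.neg_of_miss
    · intro h
      rw [sub_eq_zero] at h
      rw [h] at hwD
      exact hnot x hx hwD
    · intro μ hμ
      refine Set.disjoint_left.1 (hAF x hx w ⟨hwD, hwK⟩) ?_ hμ
      rw [mem_lineThrough]
      exact ⟨μ, rfl⟩
  have F5 : ∀ w ∈ (Δ x).direction, w ∈ frontier K → ∃ d ∈ (Δ x).direction, d ≠ 0 ∧
      BQ a b t k d x = 0 ∧ BQ a b t k d w = 0 := by
    intro w hwD hwK
    obtain ⟨P1, P2, u1, u2, u3, u4, u5, u6⟩ := pts w hwD hwK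
    obtain ⟨Q1, Q2, v1, v2, v3, v4, v5, v6⟩ := pts (-w) ((Δ x).direction.neg_mem hwD)
      (frontier_neg' hKsym hwK)
    have hgw := (hΔ w hwK).2
    have hd1 : P1 - P2 ∈ (Δ x).direction := AffineSubspace.vsub_mem_direction (hgr u2) (hgr u3)
    have hd2 : P1 - P2 ∈ (Δ w).direction := AffineSubspace.vsub_mem_direction (hgw u4) (hgw u5)
    have hd3 : Q1 - Q2 ∈ (Δ x).direction := AffineSubspace.vsub_mem_direction (hgr v2) (hgr v3)
    have hd4 : Q1 - Q2 ∈ (Δ w).direction := by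
      have q1 := graze_neg hLcomp.isClosed hLconv h0L hLsym v4
      have q2 := graze_neg hLcomp.isClosed hLconv h0L hLsym v5
      have := AffineSubspace.vsub_mem_direction (hgw q2) (hgw q1)
      have e : -Q2 -ᵥ -Q1 = Q1 - Q2 := by rw [vsub_eq_sub]; abel
      rwa [e] at this
    have hd0 : P1 - P2 ≠ 0 := sub_ne_zero.2 u1
    obtain ⟨c, hc⟩ := parallel_of hpl hd1 hd3 hd2 hd4 hwD (hnot w hwK) hd0
    have hc0 : c ≠ 0 := by
      rintro rfl
      rw [zero_smul, sub_eq_zero] at hc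
      exact v1 hc
    refine ⟨P1 - P2, hd1, hd0, ?_, ?_⟩
    all_goals
      have e1 : BQ a b t k (P1 - P2) w - BQ a b t k (P1 - P2) x = 0 := by rw [← map_sub]; exact u6
      have e2 : BQ a b t k (P1 - P2) w + BQ a b t k (P1 - P2) x = 0 := by
        rw [hc, Bsymm, map_smul, Bsymm, smul_eq_mul] at v6
        have := (mul_eq_zero.1 v6).resolve_left hc0
        rw [map_sub, map_neg] at this
        linarith
      linarith
  have F6 : ∀ v ∈ (Δ x).direction, BQ a b t k v x = 0 := by
    by_contra hcon
    push Not at hcon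
    obtain ⟨v0, hv0, hB0⟩ := hcon
    have hv0n : v0 ≠ 0 := by
      rintro rfl
      apply hB0; rw [BQ_apply]; simp
    obtain ⟨r0, -, hr0⟩ := exists_scale hKcomp hKconv h0K hv0n
    obtain ⟨d, hdD, hd0, hdx, -⟩ := F5 _ ((Δ x).direction.smul_mem r0 hv0) hr0
    have hall : ∀ w ∈ (Δ x).direction, BQ a b t k d w = 0 := by
      intro w hw
      by_cases hw0 : w = 0
      · rw [hw0, map_zero]
      obtain ⟨r, hr, hrK⟩ := exists_scale hKcomp hKconv h0K hw0
      obtain ⟨d', hdD', hd0', hdx', hdw'⟩ := F5 _ ((Δ x).direction.smul_mem r hw) hrK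
      obtain ⟨c, hc⟩ := parallel_of hpl (W := LinearMap.ker (BQ a b t k x : E3 →ₗ[ℝ] ℝ)) hdD' hdD
        (by simpa using (Bsymm x d').trans hdx') (by simpa using (Bsymm x d).trans hdx) hv0
        (by simpa using fun h => hB0 ((Bsymm v0 x).trans h)) hd0'
      rw [map_smul, smul_eq_mul] at hdw'
      have := (mul_eq_zero.1 hdw').resolve_left hr
      rw [hc, Bsymm, map_smul, Bsymm, this, smul_zero]
    apply hd0
    apply D.nondeg
    intro y
    have hy : y - (N y / N x) • x ∈ (Δ x).direction := by
      rw [hN, map_sub, map_smul, smul_eq_mul, div_mul_cancel₀ _ hNx, sub_self]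
    have := hall _ hy
    rw [map_sub, map_smul, hdx, smul_zero, sub_zero] at this
    exact this
  -- final step
  have hNp : N p = lam * N x := by rw [hlamN]; exact (hmem p).1 (hgr hp)
  have hvD : p - lam • x ∈ (Δ x).direction := by
    rw [hN, map_sub, map_smul, hNp, smul_eq_mul, sub_self]
  have hF := F6 _ hvD
  have hfx : BQ a b t k (p - x) x = -k := by
    rw [BQ_apply, D.ap, D.bp, D.tf, D.tx]; ring
  have hl1 : lam ≠ 1 := by
    intro h
    rw [h, one_smul, hfx] at hF
    linarith
  have htn : t ((2 * lam - 1) • x - p) = 2 * (lam - 1) := by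
    rw [map_sub, map_smul, D.tx, D.tp, smul_eq_mul]; ring
  have hQn : BQ a b t k ((2 * lam - 1) • x - p) ((2 * lam - 1) • x - p) = 0 := by
    have hff : BQ a b t k (p - x) (p - x) = 0 := by
      rw [BQ_apply, D.ap, D.bp, D.tf]; ring
    rw [BQ_apply] at hff hF ⊢
    simp only [map_sub, map_smul, smul_eq_mul] at hff hF ⊢
    linear_combination hff - 4 * (lam - 1) * hF
  obtain ⟨μ, -, -, hg⟩ := D.null (by rw [htn]; intro h; apply hl1; linarith) hQn
  have hNZ := (hmem _).1 (hgr hg)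
  rw [← hlamN, map_add, map_smul, map_sub, map_smul, hNp, smul_eq_mul, smul_eq_mul] at hNZ
  have hμ : μ = 1 := by
    have : (μ - 1) * ((lam - 1) * N x) = 0 := by linear_combination hNZ
    rcases mul_eq_zero.1 this with h | h
    · linarith
    · rcases mul_eq_zero.1 h with h | h
      · exact absurd (by linarith) hl1
      · exact absurd h hNx
  rw [hμ] at hg
  have e : x + (1 : ℝ) • ((2 * lam - 1) • x - p) = (2 : ℝ) • lam • x - p := by module
  rw [e] at hg
  exact hg


end Helpers

theorem statement1
    (K L : Set E3)
    (hKcomp : IsCompact K) (hKconv : Convex ℝ K) (hKint : (interior K).Nonempty)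
    (hKsym : K = -K)
    (hLcomp : IsCompact L) (hLconv : Convex ℝ L) (hLint : (interior L).Nonempty)
    (hLsym : L = -L) (hLstrict : StrictConvex ℝ L)
    (hLK : L ⊆ interior K)
    (Δ : E3 → AffineSubspace ℝ E3)
    (hΔ : ∀ z ∈ frontier K, IsPlane (Δ z) ∧ graze L z ⊆ (Δ z : Set E3))
    (hAF : AlmostFree K L Δ) :
    ∀ x ∈ frontier K, ∃ Ox : E3,
      lineThrough x (-x) ∩ (Δ x : Set E3) = {Ox} ∧
      ∀ p ∈ graze L x, (2 : ℝ) • Ox - p ∈ graze L x := by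
  exact final_thm K L hKcomp hKconv hKint hKsym hLcomp hLconv hLint hLsym hLstrict hLK Δ hΔ hAF

end
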